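/- arXiv:1207.2895 — 10 statements merged into one kernel-verified Lean document; each statement's English description precedes it below -/
import Mathlib

section
/- Let α ∈ ℂ with α ≠ 0, and let v : ℤ × ℤ → ℂ be a solution of the linear equation L_α with v(n,m) ≠ 0 for all n,m ∈ ℤ. Then the function u : ℤ × ℤ → ℂ defined by the discrete Hopf–Cole transform u(n,m) = v(n+1,m)/v(n,m) is a solution of the discrete Burgers-type equation B_α. -/
/-- `v` is a solution of the linear equation `L_α`:
`v(n+1,m+1) + v(n,m+1) = α^n (v(n+1,m) − v(n,m))` for all integers `n, m`. -/
def LinSol (α : ℂ) (v : ℤ → ℤ → ℂ) : Prop :=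
  ∀ n m : ℤ, v (n + 1) (m + 1) + v n (m + 1) = α ^ n * (v (n + 1) m - v n m)

/-- `u` is a solution of the discrete Burgers-type equation `B_α`:
`(u(n+1,m+1)+1)(u(n,m)−1)u(n,m+1) = α (u(n,m+1)+1)(u(n+1,m)−1)u(n,m)`. -/
def BurSol (α : ℂ) (u : ℤ → ℤ → ℂ) : Prop :=
  ∀ n m : ℤ, (u (n + 1) (m + 1) + 1) * (u n m - 1) * u n (m + 1)
    = α * (u n (m + 1) + 1) * (u (n + 1) m - 1) * u n m

section Ring

variable {R : Type*} [CommRing R] {α : R} {c u v : ℤ → ℤ → R}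

theorem linear_equation_in_ratios (hu : ∀ n m, v (n + 1) m = u n m * v n m)
    (hv : ∀ n m, v (n + 1) (m + 1) + v n (m + 1) = c n m * (v (n + 1) m - v n m)) (n m : ℤ) :
    (u n (m + 1) + 1) * v n (m + 1) = c n m * ((u n m - 1) * v n m) := by
  simpa only [hu, add_one_mul, sub_one_mul] using hv n m

/-- Cross-multiplying the linear equations at `n` and `n + 1` eliminates `c`, leaving only the
factor `α`; every value of `v` is then a multiple of `v n m` or `v n (m + 1)`. Taking `u` as a
solution of `v (n + 1) m = u n m * v n m` avoids division. -/
theorem hopf_cole_maps_linear_to_burgers_general (hc : ∀ n m, c (n + 1) m = c n m * α)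
    (hv : ∀ n m, v (n + 1) (m + 1) + v n (m + 1) = c n m * (v (n + 1) m - v n m))
    (hreg : ∀ n m, IsRegular (v n m)) (hu : ∀ n m, v (n + 1) m = u n m * v n m) (n m : ℤ) :
    (u (n + 1) (m + 1) + 1) * (u n m - 1) * u n (m + 1)
      = α * (u n (m + 1) + 1) * (u (n + 1) m - 1) * u n m := by
  have at_n := linear_equation_in_ratios hu hv n m
  have at_succ : (u (n + 1) (m + 1) + 1) * (u n (m + 1) * v n (m + 1))
      = c n m * α * ((u (n + 1) m - 1) * (u n m * v n m)) := by
    simpa only [hc, hu n] using linear_equation_in_ratios hu hv (n + 1) m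
  apply ((hreg n m).mul (hreg n (m + 1))).right
  calc (u (n + 1) (m + 1) + 1) * (u n m - 1) * u n (m + 1) * (v n m * v n (m + 1))
      = (u (n + 1) (m + 1) + 1) * (u n (m + 1) * v n (m + 1)) * ((u n m - 1) * v n m) := by ring
    _ = α * ((u (n + 1) m - 1) * (u n m * v n m)) * (c n m * ((u n m - 1) * v n m)) := by
      rw [at_succ]; ring
    _ = α * ((u (n + 1) m - 1) * (u n m * v n m)) * ((u n (m + 1) + 1) * v n (m + 1)) := by
      rw [at_n]
    _ = α * (u n (m + 1) + 1) * (u (n + 1) m - 1) * u n m * (v n m * v n (m + 1)) := by ring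

end Ring

/-- The discrete Hopf–Cole transform `u(n,m) = v(n+1,m)/v(n,m)` maps nowhere-vanishing
solutions of the linear equation `L_α` to solutions of the Burgers-type equation `B_α`. -/
theorem hopf_cole_maps_linear_to_burgers (α : ℂ) (hα : α ≠ 0)
    (v : ℤ → ℤ → ℂ) (hv : LinSol α v) (hv0 : ∀ n m : ℤ, v n m ≠ 0) :
    BurSol α (fun n m => v (n + 1) m / v n m) := by
  exact hopf_cole_maps_linear_to_burgers_general (c := fun n _ => α ^ n)
    (u := fun n m => v (n + 1) m / v n m) (fun n _ => zpow_add_one₀ hα n) hv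
    (fun n m => .of_ne_zero (hv0 n m)) fun n m => (div_mul_cancel₀ _ (hv0 n m)).symm
end

section
/- Let α ∈ ℂ with α ≠ 0, let k ≥ 1, and let W : ℤ × ℤ → ((Fin (k+1) → ℂ) → ℂ) be a family of functions such that for every solution u of B_α with u(n,m) ≠ 0 for all n,m one has W(n,m+1)(u(n,m+1), u(n+1,m+1), …, u(n+k,m+1)) = W(n,m)(u(n,m), u(n+1,m), …, u(n+k,m)) for all n,m ∈ ℤ. Then for every solution v of L_α with v(n,m) ≠ 0 for all n,m, the function Ŵ(n,m) := W(n,m)(v(n+1,m)/v(n,m), v(n+2,m)/v(n+1,m), …, v(n+k+1,m)/v(n+k,m)) satisfies Ŵ(n,m+1) = Ŵ(n,m) for all n,m ∈ ℤ; that is, the n-direction first-integral invariance of B_α transfers through the Hopf–Cole transform to an invariant of L_α depending on v(n,m), …, v(n+k+1,m). -/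
/-!
In terms of `u = v(n+1,m) / v(n,m)`, the factors `u + 1` and `u - 1` of `B_α` are the sums and
differences in `L_α`, divided by a value of `v`. Dividing `L_α` at `(n+1, m)` by `L_α` at `(n, m)`
turns the coefficient `α ^ n` into the constant ratio `α`; cross-multiplied, so that vanishing
sums and differences do no harm, this is `B_α` for `u`. Hence every identity satisfied by all
nowhere-vanishing solutions of `B_α` holds in particular for `u`.
-/

section HopfCole

variable {K : Type*} [Field K]

/-- The Hopf–Cole transform `u(n,m) = v(n+1,m) / v(n,m)` of a lattice function, which linearizes
`B_α`. Where `v` vanishes, division by zero gives it the value `0`. -/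
def hopfCole (v : ℤ → ℤ → K) (n m : ℤ) : K :=
  v (n + 1) m / v n m

theorem hopfCole_ne_zero {v : ℤ → ℤ → K} (hv₀ : ∀ n m, v n m ≠ 0) (n m : ℤ) :
    hopfCole v n m ≠ 0 :=
  div_ne_zero (hv₀ (n + 1) m) (hv₀ n m)

theorem burgers_div_of_linear {α β a b c a' b' c' : K}
    (ha : a ≠ 0) (hb : b ≠ 0) (ha' : a' ≠ 0) (hb' : b' ≠ 0)
    (hab : b' + a' = β * (b - a)) (hbc : c' + b' = β * α * (c - b)) :
    (c' / b' + 1) * (b / a - 1) * (b' / a') = α * (b' / a' + 1) * (c / b - 1) * (b / a) :=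
  calc
    (c' / b' + 1) * (b / a - 1) * (b' / a') = (c' + b') * (b - a) / (a * a') := by
      field_simp
    _ = α * (b' + a') * (c - b) / (a * a') := by
      rw [hab, hbc]
      ring
    _ = α * (b' / a' + 1) * (c / b - 1) * (b / a) := by
      field_simp

theorem burgers_hopfCole_of_linear {α : K} (hα : α ≠ 0) {v : ℤ → ℤ → K}
    (hv : ∀ n m, v (n + 1) (m + 1) + v n (m + 1) = α ^ n * (v (n + 1) m - v n m))
    (hv₀ : ∀ n m, v n m ≠ 0) (n m : ℤ) :
    (hopfCole v (n + 1) (m + 1) + 1) * (hopfCole v n m - 1) * hopfCole v n (m + 1) =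
      α * (hopfCole v n (m + 1) + 1) * (hopfCole v (n + 1) m - 1) * hopfCole v n m := by
  have hv_succ : v (n + 1 + 1) (m + 1) + v (n + 1) (m + 1) =
      α ^ n * α * (v (n + 1 + 1) m - v (n + 1) m) := by
    rw [← zpow_add_one₀ hα]
    exact hv (n + 1) m
  exact burgers_div_of_linear (hv₀ _ _) (hv₀ _ _) (hv₀ _ _) (hv₀ _ _) (hv n m) hv_succ

theorem first_integral_transfer_n_direction_general {ι X : Type*} {α : K} (hα : α ≠ 0)
    (s : ι → ℤ) (W : ℤ → ℤ → (ι → K) → X)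
    (hW : ∀ u : ℤ → ℤ → K,
      (∀ n m, (u (n + 1) (m + 1) + 1) * (u n m - 1) * u n (m + 1) =
        α * (u n (m + 1) + 1) * (u (n + 1) m - 1) * u n m) →
      (∀ n m, u n m ≠ 0) → ∀ n m,
        W n (m + 1) (fun i => u (n + s i) (m + 1)) = W n m (fun i => u (n + s i) m))
    {v : ℤ → ℤ → K}
    (hv : ∀ n m, v (n + 1) (m + 1) + v n (m + 1) = α ^ n * (v (n + 1) m - v n m))
    (hv₀ : ∀ n m, v n m ≠ 0) (n m : ℤ) :
    W n (m + 1) (fun i => hopfCole v (n + s i) (m + 1)) =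
      W n m (fun i => hopfCole v (n + s i) m) :=
  hW (hopfCole v) (burgers_hopfCole_of_linear hα hv hv₀) (hopfCole_ne_zero hv₀) n m

end HopfCole

/-- The `n`-direction first-integral invariance of `B_α` transfers, through the
Hopf–Cole transform `u(n,m) = v(n+1,m)/v(n,m)`, to an invariant of `L_α` depending
on `v(n,m), …, v(n+k+1,m)`. -/
theorem first_integral_transfer_n_direction (α : ℂ) (hα : α ≠ 0) (k : ℕ) (hk : 1 ≤ k)
    (W : ℤ → ℤ → (Fin (k + 1) → ℂ) → ℂ)
    (hW : ∀ u : ℤ → ℤ → ℂ, BurSol α u → (∀ n m : ℤ, u n m ≠ 0) → ∀ n m : ℤ,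
      W n (m + 1) (fun i => u (n + ((i : ℕ) : ℤ)) (m + 1))
        = W n m (fun i => u (n + ((i : ℕ) : ℤ)) m))
    (v : ℤ → ℤ → ℂ) (hv : LinSol α v) (hv0 : ∀ n m : ℤ, v n m ≠ 0) :
    ∀ n m : ℤ,
      W n (m + 1) (fun i => v (n + ((i : ℕ) : ℤ) + 1) (m + 1) / v (n + ((i : ℕ) : ℤ)) (m + 1))
        = W n m (fun i => v (n + ((i : ℕ) : ℤ) + 1) m / v (n + ((i : ℕ) : ℤ)) m) := by
  exact first_integral_transfer_n_direction_general hα (fun i : Fin (k + 1) => ((i : ℕ) : ℤ)) W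
    hW hv hv0
end

section
/- Let α ∈ ℂ with α ≠ 0, let l ≥ 1, and let b : Fin (l+1) → ℤ → ℤ → ℂ be coefficients such that for every solution v of L_α the linear expression Ŵ(n,m) := Σ_{j=0}^{l} b(j)(n,m)·v(n,m+j) satisfies Ŵ(n+1,m) = Ŵ(n,m) for all n,m ∈ ℤ. Let v be a solution of L_α with v(n,m) ≠ 0 and Ŵ(n,m) ≠ 0 for all n,m, set u(n,m) := v(n+1,m)/v(n,m), assume u(n,m) ≠ 1 for all n,m, and define Z(n,m) := α^n·(u(n,m) − 1)/(u(n,m+1) + 1). Then for all n,m ∈ ℤ the quantity W(n,m) := (Σ_{j=0}^{l} b(j)(n,m+1)·∏_{i=0}^{j} Z(n,m+i)) / (Σ_{j=0}^{l} b(j)(n,m)·∏_{i=0}^{j−1} Z(n,m+i)) (where the empty product for j = 0 in the denominator equals 1) satisfies both W(n,m) = Ŵ(n,m+1)/Ŵ(n,m) and W(n+1,m) = W(n,m). -/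
/-- The linear combination `Ŵ(n,m) = Σ_{j=0}^{l} b(j)(n,m)·v(n,m+j)`. -/
noncomputable def WhatM (l : ℕ) (b : Fin (l + 1) → ℤ → ℤ → ℂ) (v : ℤ → ℤ → ℂ)
    (n m : ℤ) : ℂ :=
  ∑ j : Fin (l + 1), b j n m * v n (m + ((j : ℕ) : ℤ))

/-- `Z(n,m) = α^n (u(n,m) − 1)/(u(n,m+1) + 1)` where `u(n,m) = v(n+1,m)/v(n,m)`. -/
noncomputable def Zfun (α : ℂ) (v : ℤ → ℤ → ℂ) (n m : ℤ) : ℂ :=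
  α ^ n * (v (n + 1) m / v n m - 1) / (v (n + 1) (m + 1) / v n (m + 1) + 1)

/-- The ratio
`W(n,m) = (Σ_j b(j)(n,m+1)·∏_{i=0}^{j} Z(n,m+i)) / (Σ_j b(j)(n,m)·∏_{i=0}^{j−1} Z(n,m+i))`
(the empty product for `j = 0` in the denominator equals `1`). -/
noncomputable def WratioM (l : ℕ) (b : Fin (l + 1) → ℤ → ℤ → ℂ) (Z : ℤ → ℤ → ℂ)
    (n m : ℤ) : ℂ :=
  (∑ j : Fin (l + 1), b j n (m + 1) * ∏ i ∈ Finset.range ((j : ℕ) + 1), Z n (m + (i : ℤ)))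
    / (∑ j : Fin (l + 1), b j n m * ∏ i ∈ Finset.range (j : ℕ), Z n (m + (i : ℤ)))

/-!
Along a solution of the linear equation the Hopf–Cole variable `Z` is the ratio of consecutive
values of `v` in the `m` direction, so products of consecutive `Z` telescope. Hence the denominator
of `W(n,m)` is `Ŵ(n,m) / v(n,m)` and its numerator is `Ŵ(n,m+1) / v(n,m)`. In the quotient
`v(n,m)` cancels, and what remains inherits the invariance of `Ŵ` under `n ↦ n + 1`.
-/

section Telescoping

open Finset

theorem prod_range_div_of_ne_zero {G : Type*} [CommGroupWithZero G] {f : ℕ → G}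
    (hf : ∀ i, f i ≠ 0) (k : ℕ) : ∏ i ∈ range k, f (i + 1) / f i = f k / f 0 :=
  prod_range_induction _ (fun k ↦ f k / f 0) (div_self (hf 0)) k fun i _ ↦ by
    rw [mul_comm, div_mul_div_cancel₀ (hf i)]

variable {ι K : Type*} [Fintype ι]

/-- The linear expression `Σ_j c(j)·x(m + k(j))` in the shifts of a sequence `x` by the offsets
`k`. For `ι = Fin (l + 1)` and `k(j) = j`, taken at fixed `n`, this is `Ŵ`. -/
def shiftSum [Semiring K] (k : ι → ℕ) (c : ι → K) (x : ℤ → K) (m : ℤ) : K :=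
  ∑ j, c j * x (m + k j)

/-- The sum `Σ_j c(j)·∏_{i < k(j)} r(m + i)`: the form taken by `shiftSum`, up to a factor `x(m)`,
in terms of the ratios `r` of consecutive values of `x`. -/
def shiftProdSum [CommSemiring K] (k : ι → ℕ) (c : ι → K) (r : ℤ → K) (m : ℤ) : K :=
  ∑ j, c j * ∏ i ∈ range (k j), r (m + i)

theorem shiftSum_add_one_offset [Semiring K] (k : ι → ℕ) (c : ι → K) (x : ℤ → K) (m : ℤ) :
    shiftSum (fun j ↦ k j + 1) c x m = shiftSum k c x (m + 1) := by
  simp only [shiftSum, Nat.cast_add, Nat.cast_one, add_assoc, add_comm (1 : ℤ)]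

theorem shiftProdSum_div_eq [Semifield K] {x : ℤ → K} (hx : ∀ m, x m ≠ 0) (k : ι → ℕ)
    (c : ι → K) (m : ℤ) :
    shiftProdSum k c (fun m ↦ x (m + 1) / x m) m = shiftSum k c x m / x m := by
  have telescope (t : ℕ) :
      ∏ i ∈ range t, x (m + i + 1) / x (m + i) = x (m + t) / x m := by
    simpa [add_assoc] using prod_range_div_of_ne_zero (fun i : ℕ ↦ hx (m + i)) t
  simp only [shiftProdSum, shiftSum, telescope, sum_div, mul_div_assoc]

end Telescoping

section HopfCole

variable {ι K : Type*} [Fintype ι] [Field K]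

/-- `v` solves `L_α` with the factor `α^n` replaced by an arbitrary coefficient `a(n,m)`. -/
def IsLinearSolution (a v : ℤ → ℤ → K) : Prop :=
  ∀ n m : ℤ, v (n + 1) (m + 1) + v n (m + 1) = a n m * (v (n + 1) m - v n m)

/-- The function `Z` of the Hopf–Cole transform `u(n,m) = v(n+1,m)/v(n,m)`, with the factor `α^n`
replaced by an arbitrary coefficient `a(n,m)`. -/
def hopfColeZ (a v : ℤ → ℤ → K) (n m : ℤ) : K :=
  a n m * (v (n + 1) m / v n m - 1) / (v (n + 1) (m + 1) / v n (m + 1) + 1)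

/-- The ratio `W(n,m)` as an expression in `Z`, for a linear expression with arbitrary offsets
`k(j)` in the `m` direction in place of `0, …, l`. -/
def shiftRatio (k : ι → ℕ) (b : ι → ℤ → ℤ → K) (Z : ℤ → ℤ → K) (n m : ℤ) : K :=
  shiftProdSum (fun j ↦ k j + 1) (b · n (m + 1)) (Z n) m / shiftProdSum k (b · n m) (Z n) m

variable {a v : ℤ → ℤ → K}

theorem IsLinearSolution.hopfColeZ_eq_div (hv : IsLinearSolution a v) {n m : ℤ}
    (ha : a n m ≠ 0) (hv0 : v n m ≠ 0) (hv1 : v n (m + 1) ≠ 0)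
    (hu : v (n + 1) m / v n m ≠ 1) : hopfColeZ a v n m = v n (m + 1) / v n m := by
  have hnum : a n m * (v (n + 1) m - v n m) ≠ 0 :=
    mul_ne_zero ha (sub_ne_zero.2 fun h ↦ hu ((div_eq_one_iff_eq hv0).2 h))
  calc hopfColeZ a v n m
      = a n m * (v (n + 1) m - v n m) / v n m
          / ((v (n + 1) (m + 1) + v n (m + 1)) / v n (m + 1)) := by
        rw [hopfColeZ, div_sub_one hv0, div_add_one hv1, ← mul_div_assoc]
    _ = v n (m + 1) / v n m := by
        rw [hv n m, div_div_div_comm, div_self hnum, one_div_div]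

theorem shiftRatio_div_eq (hv0 : ∀ n m, v n m ≠ 0) (k : ι → ℕ) (b : ι → ℤ → ℤ → K) (n m : ℤ) :
    shiftRatio k b (fun n m ↦ v n (m + 1) / v n m) n m
      = shiftSum k (b · n (m + 1)) (v n) (m + 1) / shiftSum k (b · n m) (v n) m := by
  rw [shiftRatio, shiftProdSum_div_eq (hv0 n), shiftProdSum_div_eq (hv0 n),
    shiftSum_add_one_offset, div_div_div_cancel_right₀ (hv0 n m)]

theorem linear_first_integral_descends_m_general (hv : IsLinearSolution a v)
    (ha : ∀ n m, a n m ≠ 0) (hv0 : ∀ n m, v n m ≠ 0) (hu : ∀ n m, v (n + 1) m / v n m ≠ 1)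
    (k : ι → ℕ) (b : ι → ℤ → ℤ → K)
    (hW0 : ∀ n m, shiftSum k (b · n m) (v n) m ≠ 0)
    (hW : ∀ n m, shiftSum k (b · (n + 1) m) (v (n + 1)) m = shiftSum k (b · n m) (v n) m)
    (n m : ℤ) :
    shiftProdSum k (b · n m) (hopfColeZ a v n) m ≠ 0
      ∧ shiftRatio k b (hopfColeZ a v) n m
        = shiftSum k (b · n (m + 1)) (v n) (m + 1) / shiftSum k (b · n m) (v n) m
      ∧ shiftRatio k b (hopfColeZ a v) (n + 1) m = shiftRatio k b (hopfColeZ a v) n m := by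
  have hZ : hopfColeZ a v = fun n m ↦ v n (m + 1) / v n m := by
    ext n m
    exact hv.hopfColeZ_eq_div (ha n m) (hv0 n m) (hv0 n (m + 1)) (hu n m)
  rw [hZ]
  refine ⟨?_, shiftRatio_div_eq hv0 k b n m, ?_⟩
  · rw [shiftProdSum_div_eq (hv0 n)]
    exact div_ne_zero (hW0 n m) (hv0 n m)
  · rw [shiftRatio_div_eq hv0, shiftRatio_div_eq hv0, hW, hW]

end HopfCole

/-- A linear `m`-direction first integral `Ŵ` of `L_α` of order `l` descends, through the
Hopf–Cole transform, to a first integral `W(n,m) = Ŵ(n,m+1)/Ŵ(n,m)` of the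
Burgers-type equation, expressible in terms of `Z`. -/
theorem linear_first_integral_descends_m (α : ℂ) (hα : α ≠ 0) (l : ℕ) (hl : 1 ≤ l)
    (b : Fin (l + 1) → ℤ → ℤ → ℂ)
    (hb : ∀ v : ℤ → ℤ → ℂ, LinSol α v → ∀ n m : ℤ,
      WhatM l b v (n + 1) m = WhatM l b v n m)
    (v : ℤ → ℤ → ℂ) (hv : LinSol α v)
    (hv0 : ∀ n m : ℤ, v n m ≠ 0) (hW0 : ∀ n m : ℤ, WhatM l b v n m ≠ 0)
    (h1 : ∀ n m : ℤ, v (n + 1) m / v n m ≠ 1) :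
    ∀ n m : ℤ,
      WratioM l b (Zfun α v) n m = WhatM l b v n (m + 1) / WhatM l b v n m
      ∧ WratioM l b (Zfun α v) (n + 1) m = WratioM l b (Zfun α v) n m :=
  fun n m ↦ (linear_first_integral_descends_m_general (a := fun n _ ↦ α ^ n) hv
    (fun n _ ↦ zpow_ne_zero n hα) hv0 h1 (fun j : Fin (l + 1) ↦ (j : ℕ)) b hW0 (hb v hv) n m).2
end

section
/- Let α ∈ ℂ with α ≠ 0 and let v be a solution of the linear equation L_α. Define the first-direction Laplace transforms v_j : ℤ × ℤ → ℂ by v_0 = v and v_j(n,m) = v_{j−1}(n+1,m) + α^{j−1}·v_{j−1}(n,m) for j ≥ 1. Then for every j ≥ 0 and all n,m ∈ ℤ: v_j(n+1,m+1) + α^j·v_j(n,m+1) = α^{n+j}·(v_j(n+1,m) − v_j(n,m)); equivalently, v_j satisfies (T₂ − α^{n+j})(T₁ + α^j)v_j + α^{n+j}(1 + α^j)·v_j = 0, where T₁, T₂ are the unit shifts in n and m. -/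
/-- The first-direction discrete Laplace transforms:
`v_0 = v` and `v_j(n,m) = v_{j−1}(n+1,m) + α^{j−1}·v_{j−1}(n,m)` for `j ≥ 1`. -/
noncomputable def lap1 (α : ℂ) (v : ℤ → ℤ → ℂ) : ℕ → ℤ → ℤ → ℂ
  | 0 => v
  | j + 1 => fun n m => lap1 α v j (n + 1) m + α ^ j * lap1 α v j n m

/-! Write `T₁`, `T₂` for the unit shifts, so that `L_α` reads
`T₂ (T₁ + a) u = c (T₁ - 1) u` with `a = 1` and `c n = α ^ n`. In general, when
`c (n + 1) = α * c n`, moving `T₁` past `c` costs a factor `α`, i.e.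
`(T₁ + a * α) c = α * c * (T₁ + a)`. Hence the Laplace transform
`w = (T₁ + a) u` satisfies
`T₂ (T₁ + a * α) w = (T₁ + a * α) c (T₁ - 1) u = α * c * (T₁ - 1) w`,
which is the same equation with `a` and `c` both multiplied by `α`. -/

section LaplaceTransform

variable {R M : Type*} [CommRing R] [AddCommGroup M] [Module R M]

/-- The linear lattice equation with constant coefficient `a` and coefficient `c` varying along the
first direction. It includes `L_α`, where `a = 1` and `c n = α ^ n`, and the equations satisfied by
its Laplace transforms. -/
def LinSolWith (a : R) (c : ℤ → R) (u : ℤ → ℤ → M) : Prop :=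
  ∀ n m : ℤ, u (n + 1) (m + 1) + a • u n (m + 1) = c n • (u (n + 1) m - u n m)

/-- The first-direction Laplace transform of a solution of an equation with constant coefficient
`a`: the operator `T₁ + a`. -/
def laplaceTransform (a : R) (u : ℤ → ℤ → M) : ℤ → ℤ → M :=
  fun n m => u (n + 1) m + a • u n m

/-- The chain of first-direction Laplace transforms starting at constant coefficient `1`; the
coefficient at stage `j` is `α ^ j`. -/
def iteratedLaplaceTransform (α : R) (u : ℤ → ℤ → M) : ℕ → ℤ → ℤ → M
  | 0 => u
  | j + 1 => laplaceTransform (α ^ j) (iteratedLaplaceTransform α u j)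

theorem LinSolWith.laplaceTransform {α a : R} {c : ℤ → R} {u : ℤ → ℤ → M}
    (hu : LinSolWith a c u) (hc : ∀ n, c (n + 1) = α * c n) :
    LinSolWith (a * α) (fun n => α * c n) (laplaceTransform a u) := by
  intro n m
  calc
    u (n + 1 + 1) (m + 1) + a • u (n + 1) (m + 1)
          + (a * α) • (u (n + 1) (m + 1) + a • u n (m + 1))
        = c (n + 1) • (u (n + 1 + 1) m - u (n + 1) m)
          + (a * α) • c n • (u (n + 1) m - u n m) := by rw [hu (n + 1) m, hu n m]
    _ = (α * c n) • (u (n + 1 + 1) m + a • u (n + 1) m - (u (n + 1) m + a • u n m)) := by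
      rw [hc]
      module

theorem laplace_transform_n_equation_general {α : R} {c : ℤ → R} {u : ℤ → ℤ → M}
    (hc : ∀ n, c (n + 1) = α * c n) (hu : LinSolWith 1 c u) (j : ℕ) :
    LinSolWith (α ^ j) (fun n => α ^ j * c n) (iteratedLaplaceTransform α u j) := by
  induction j with
  | zero => simpa [iteratedLaplaceTransform] using hu
  | succ j ih =>
    have hcj (n : ℤ) : α ^ j * c (n + 1) = α * (α ^ j * c n) := by
      rw [hc, mul_left_comm]
    simpa only [iteratedLaplaceTransform, pow_succ, mul_assoc, mul_left_comm α] using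
      ih.laplaceTransform hcj

end LaplaceTransform

theorem LinSol.linSolWith {α : ℂ} {v : ℤ → ℤ → ℂ} (hv : LinSol α v) :
    LinSolWith 1 (fun n : ℤ => α ^ n) v := by
  simpa only [LinSol, LinSolWith, smul_eq_mul, one_mul] using hv

theorem lap1_eq_iteratedLaplaceTransform (α : ℂ) (v : ℤ → ℤ → ℂ) (j : ℕ) :
    lap1 α v j = iteratedLaplaceTransform α v j := by
  induction j with
  | zero => rfl
  | succ j ih =>
    rw [lap1, iteratedLaplaceTransform, ih]
    rfl

/-- Each first-direction Laplace transform `v_j` of a solution of `L_α` satisfies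
`v_j(n+1,m+1) + α^j·v_j(n,m+1) = α^{n+j}·(v_j(n+1,m) − v_j(n,m))`, i.e.
`(T₂ − α^{n+j})(T₁ + α^j)v_j + α^{n+j}(1 + α^j)·v_j = 0`. -/
theorem laplace_transform_n_equation (α : ℂ) (hα : α ≠ 0)
    (v : ℤ → ℤ → ℂ) (hv : LinSol α v) :
    ∀ (j : ℕ) (n m : ℤ),
      lap1 α v j (n + 1) (m + 1) + α ^ j * lap1 α v j n (m + 1)
        = α ^ (n + (j : ℤ)) * (lap1 α v j (n + 1) m - lap1 α v j n m) := by
  intro j n m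
  have hc (n : ℤ) : α ^ (n + 1) = α * α ^ n := by rw [zpow_add_one₀ hα, mul_comm]
  simpa only [lap1_eq_iteratedLaplaceTransform, zpow_add₀ hα, zpow_natCast, mul_comm (α ^ n),
    smul_eq_mul] using laplace_transform_n_equation_general hc hv.linSolWith j n m
end

section
/- Let α ∈ ℂ with α ≠ 0 and let k̂ ≥ 1. Suppose the linear equation L_α possesses a first integral of order k̂ in the n-direction. Then there exists k̃ with 0 ≤ k̃ < k̂ such that K(n,k̃) = 0 for all n ∈ ℤ, where K(n,0) := 2·α^n and K(n,j) := α^{n+j}·(1 + α^j) for j ≥ 1. Equivalently (since α ≠ 0), there exists j with 1 ≤ j < k̂ and α^j = −1. -/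
/-- `W` is a first integral of order `k` in the `n`-direction of the equation `E`:
(i) each `W n m` is differentiable at every point with all coordinates nonzero;
(ii) `W` is invariant under the `m`-shift on nowhere-vanishing solutions of `E`;
(iii) `W` genuinely depends on its 0-th and `k`-th arguments (nonzero partial
derivatives at some point with nonzero coordinates, for some `n, m`). -/
def IsFirstIntegralN (E : (ℤ → ℤ → ℂ) → Prop) (k : ℕ)
    (W : ℤ → ℤ → (Fin (k + 1) → ℂ) → ℂ) : Prop :=
  (∀ (n m : ℤ) (x : Fin (k + 1) → ℂ), (∀ i, x i ≠ 0) → DifferentiableAt ℂ (W n m) x)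
  ∧ (∀ w : ℤ → ℤ → ℂ, E w → (∀ n m : ℤ, w n m ≠ 0) → ∀ n m : ℤ,
      W n (m + 1) (fun i => w (n + ((i : ℕ) : ℤ)) (m + 1))
        = W n m (fun i => w (n + ((i : ℕ) : ℤ)) m))
  ∧ (∃ (n m : ℤ) (x : Fin (k + 1) → ℂ), (∀ i, x i ≠ 0)
      ∧ fderiv ℂ (W n m) x (Pi.single 0 1) ≠ 0)
  ∧ (∃ (n m : ℤ) (x : Fin (k + 1) → ℂ), (∀ i, x i ≠ 0)
      ∧ fderiv ℂ (W n m) x (Pi.single (Fin.last k) 1) ≠ 0)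

/-- `W` is a first integral of order `l` in the `m`-direction of the equation `E`. -/
def IsFirstIntegralM (E : (ℤ → ℤ → ℂ) → Prop) (l : ℕ)
    (W : ℤ → ℤ → (Fin (l + 1) → ℂ) → ℂ) : Prop :=
  (∀ (n m : ℤ) (x : Fin (l + 1) → ℂ), (∀ i, x i ≠ 0) → DifferentiableAt ℂ (W n m) x)
  ∧ (∀ w : ℤ → ℤ → ℂ, E w → (∀ n m : ℤ, w n m ≠ 0) → ∀ n m : ℤ,
      W (n + 1) m (fun i => w (n + 1) (m + ((i : ℕ) : ℤ)))
        = W n m (fun i => w n (m + ((i : ℕ) : ℤ))))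
  ∧ (∃ (n m : ℤ) (x : Fin (l + 1) → ℂ), (∀ i, x i ≠ 0)
      ∧ fderiv ℂ (W n m) x (Pi.single 0 1) ≠ 0)
  ∧ (∃ (n m : ℤ) (x : Fin (l + 1) → ℂ), (∀ i, x i ≠ 0)
      ∧ fderiv ℂ (W n m) x (Pi.single (Fin.last l) 1) ≠ 0)

/-- `K(n,0) = 2·α^n`, `K(n,j) = α^{n+j}·(1 + α^j)` for `j ≥ 1`. -/
noncomputable def Kfun (α : ℂ) (n : ℤ) (j : ℕ) : ℂ :=
  if j = 0 then 2 * α ^ n else α ^ (n + (j : ℤ)) * (1 + α ^ j)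

/-!
The equation `L_α` is linear, so the differential of a first integral along a nowhere vanishing
solution is itself invariant under the `m`-shift, for every solution of `L_α` taken as direction.
Hence the directions killed by the differential of `W n m` at all admissible points pass from each
row of a solution to the next. A zero row may be followed by the alternating row `(-1) ^ i`; from
there, `(-1) ^ i * [i choose j]_α` leads to `(-1) ^ i * [i choose j + 1]_α`, with coefficient
`K(n, j)`. If none of `K(n, 0), …, K(n, k - 1)` vanished, this would reach
`(-1) ^ i * [i choose k]_α`, which for `0 ≤ i ≤ k` is supported at `i = k`, contradicting the
dependence of `W` on its last argument.
-/

/-! ### Linear recurrences -/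

lemma exists_int_seq {σ : Type*} {R : ℤ → σ → σ → Prop} (n : ℤ) (a : σ)
    (fwd : ∀ i, n ≤ i → ∀ x, ∃ y, R i x y) (bwd : ∀ i < n, ∀ y, ∃ x, R i x y) :
    ∃ f : ℤ → σ, f n = a ∧ ∀ i, R i (f i) (f (i + 1)) := by
  choose F hF using fwd
  choose G hG using bwd
  let f : ℤ → σ := fun i => Int.inductionOn' i n a F fun k hk => G (k - 1) (by omega)
  refine ⟨f, Int.inductionOn'_self, fun i => ?_⟩
  rcases le_or_gt n i with hi | hi
  · have hsucc : f (i + 1) = F i hi (f i) := Int.inductionOn'_add_one hi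
    exact hsucc ▸ hF i hi (f i)
  · have hpred : f (i + 1 - 1) = G (i + 1 - 1) _ (f (i + 1)) :=
      Int.inductionOn'_sub_one (by omega : i + 1 ≤ n)
    simp only [add_sub_cancel_right] at hpred
    exact hpred ▸ hG i hi (f (i + 1))

lemma exists_ne_zero_recurrence {K : Type*} [Field K] [Uncountable K] {c : K} (hc : c ≠ 0)
    (g : ℤ → K) : ∃ s : ℤ → K, (∀ i, s i ≠ 0) ∧ ∀ i, s (i + 1) = c * s i + g i := by
  obtain ⟨p, -, hp⟩ := exists_int_seq (R := fun i x y => y = c * x + g i) 0 0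
    (fun i _ x => ⟨_, rfl⟩) (fun i _ y => ⟨(y - g i) / c, by field_simp; ring⟩)
  obtain ⟨a, ha⟩ : ∃ a, a ∉ Set.range fun i : ℤ => -p i / c ^ i :=
    (Set.ne_univ_iff_exists_notMem _).mp fun h =>
      Set.not_countable_univ (h ▸ Set.countable_range _)
  refine ⟨fun i => p i + a * c ^ i, fun i hi => ha ⟨i, ?_⟩, fun i => ?_⟩
  · rw [div_eq_iff (zpow_ne_zero i hc)]
    linear_combination -hi
  · simp only [hp i, zpow_add_one₀ hc]
    ring

lemma eq_smul_neg_one_pow {R : Type*} [Ring R] {k : ℕ} {d : Fin (k + 1) → R}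
    (h : ∀ i : Fin k, d i.succ + d i.castSucc = 0) :
    d = d 0 • fun i : Fin (k + 1) => (-1) ^ (i : ℕ) := by
  funext i
  induction i using Fin.induction with
  | zero => simp
  | succ i ih =>
    rw [eq_neg_of_add_eq_zero_left (h i), ih]
    simp [pow_succ]

/-! ### Rows of solutions -/

instance : Uncountable ℂ :=
  not_countable_iff.mp fun h => not_countable_complex (Set.countable_univ_iff.mpr h)

/-- `s` can follow `r` as a row `n ↦ v n (m + 1)` after `n ↦ v n m` of a solution `v` of `L_α`. -/
def IsNextRow (α : ℂ) (r s : ℤ → ℂ) : Prop :=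
  ∀ i, s (i + 1) + s i = α ^ i * (r (i + 1) - r i)

lemma exists_ne_zero_isNextRow (α : ℂ) (r : ℤ → ℂ) :
    ∃ s : ℤ → ℂ, (∀ i, s i ≠ 0) ∧ IsNextRow α r s := by
  obtain ⟨s, hs0, hs⟩ := exists_ne_zero_recurrence (neg_ne_zero.mpr one_ne_zero)
    fun i => α ^ i * (r (i + 1) - r i)
  exact ⟨s, hs0, fun i => by rw [hs i]; ring⟩

lemma exists_ne_zero_isNextRow_left {α : ℂ} (hα : α ≠ 0) (s : ℤ → ℂ) :
    ∃ r : ℤ → ℂ, (∀ i, r i ≠ 0) ∧ IsNextRow α r s := by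
  obtain ⟨r, hr0, hr⟩ := exists_ne_zero_recurrence one_ne_zero
    fun i => (s (i + 1) + s i) / α ^ i
  refine ⟨r, hr0, fun i => ?_⟩
  have : α ^ i ≠ 0 := zpow_ne_zero i hα
  rw [hr i]
  field_simp
  ring

lemma exists_linSol_row_eq {α : ℂ} (hα : α ≠ 0) (m : ℤ) (r : ℤ → ℂ) :
    ∃ v, LinSol α v ∧ (v · m) = r ∧ ∀ n q, q ≠ m → v n q ≠ 0 := by
  obtain ⟨f, hfm, hf⟩ := exists_int_seq
    (R := fun q a b => IsNextRow α a b ∧ (m ≤ q → ∀ i, b i ≠ 0) ∧ (q < m → ∀ i, a i ≠ 0)) m r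
    (fun q hq a =>
      have ⟨b, hb0, hab⟩ := exists_ne_zero_isNextRow α a
      ⟨b, hab, fun _ => hb0, fun h => absurd hq h.not_ge⟩)
    (fun q hq b =>
      have ⟨a, ha0, hab⟩ := exists_ne_zero_isNextRow_left hα b
      ⟨a, hab, fun h => absurd hq h.not_gt, fun _ => ha0⟩)
  refine ⟨fun n q => f q n, fun n q => (hf q).1 n, hfm, fun n q hq => ?_⟩
  rcases hq.lt_or_gt with hlt | hgt
  · exact (hf q).2.2 hlt n
  · simpa using (hf (q - 1)).2.1 (by omega) n

lemma LinSol.add_const_mul {α : ℂ} {w v : ℤ → ℤ → ℂ} (hw : LinSol α w) (hv : LinSol α v) (t : ℂ) :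
    LinSol α fun n m => w n m + t * v n m := fun n m => by
  linear_combination hw n m + t * hv n m

/-- The restriction of a row to the `k + 1` sites `n, …, n + k` seen by a first integral of
order `k`. -/
noncomputable def window (k : ℕ) (n : ℤ) : (ℤ → ℂ) →ₗ[ℂ] (Fin (k + 1) → ℂ) :=
  LinearMap.funLeft ℂ ℂ fun i => n + ((i : ℕ) : ℤ)

lemma window_apply (k : ℕ) (n : ℤ) (r : ℤ → ℂ) (i : Fin (k + 1)) :
    window k n r i = r (n + ((i : ℕ) : ℤ)) := rfl

lemma exists_window_eq {k : ℕ} (n : ℤ) (y : Fin (k + 1) → ℂ) :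
    ∃ r, window k n r = y ∧ ∀ p, ∃ i, r p = y i :=
  ⟨fun p => y (Fin.ofNat (k + 1) (p - n).toNat), funext fun i => by simp [window_apply],
    fun _ => ⟨_, rfl⟩⟩

lemma IsNextRow.window_succ_add {α : ℂ} {r s : ℤ → ℂ} (h : IsNextRow α r s)
    {k : ℕ} (n : ℤ) (i : Fin k) :
    window k n s i.succ + window k n s i.castSucc =
      α ^ (n + ((i : ℕ) : ℤ)) * (window k n r i.succ - window k n r i.castSucc) := by
  simpa [window_apply, add_assoc] using h (n + (i : ℕ))

/-! ### The differential of a first integral -/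

/-- The directions along which the derivative of `f` vanishes at every point with nonzero
coordinates. -/
noncomputable def nullDirections {𝕜 ι : Type*} [NontriviallyNormedField 𝕜] [Fintype ι]
    (f : (ι → 𝕜) → 𝕜) : Submodule 𝕜 (ι → 𝕜) :=
  ⨅ (x : ι → 𝕜) (_ : ∀ i, x i ≠ 0), (fderiv 𝕜 f x).ker

lemma mem_nullDirections {𝕜 ι : Type*} [NontriviallyNormedField 𝕜] [Fintype ι]
    {f : (ι → 𝕜) → 𝕜} {ξ : ι → 𝕜} :
    ξ ∈ nullDirections f ↔ ∀ x : ι → 𝕜, (∀ i, x i ≠ 0) → fderiv 𝕜 f x ξ = 0 := by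
  simp [nullDirections]

lemma uniqueDiffWithinAt_setOf_add_mul_ne_zero {𝕜 ι : Type*} [NontriviallyNormedField 𝕜]
    [CompleteSpace 𝕜] [Countable ι] {w : ι → 𝕜} (hw : ∀ i, w i ≠ 0) (v : ι → 𝕜) (t : 𝕜) :
    UniqueDiffWithinAt 𝕜 {t | ∀ i, w i + t * v i ≠ 0} t := by
  have hsub : (Set.range fun i => -w i / v i)ᶜ ⊆ {t | ∀ i, w i + t * v i ≠ 0} := by
    intro t ht i h
    have hv : v i ≠ 0 := fun hv => hw i (by simpa [hv] using h)
    exact ht ⟨i, by field_simp; linear_combination -h⟩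
  rw [← uniqueDiffWithinAt_closure, (((Set.countable_range _).dense_compl 𝕜).mono hsub).closure_eq]
  exact uniqueDiffWithinAt_univ

namespace IsFirstIntegralN

variable {k : ℕ} {W : ℤ → ℤ → (Fin (k + 1) → ℂ) → ℂ}

/- The perturbation `w + t v` vanishes somewhere for at most countably many `t`, so invariance can
be differentiated at `t = 0` within the remaining dense set. -/
lemma fderiv_window_succ {E : (ℤ → ℤ → ℂ) → Prop} (hW : IsFirstIntegralN E k W)
    {w v : ℤ → ℤ → ℂ} (hw : ∀ n m, w n m ≠ 0) (hE : ∀ t : ℂ, E fun n m => w n m + t * v n m)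
    (n m : ℤ) :
    fderiv ℂ (W n (m + 1)) (window k n (w · (m + 1))) (window k n (v · (m + 1))) =
      fderiv ℂ (W n m) (window k n (w · m)) (window k n (v · m)) := by
  obtain ⟨hdiff, hinv, -, -⟩ := hW
  let S : Set ℂ := {t | ∀ p : ℤ × ℤ, w p.1 p.2 + t * v p.1 p.2 ≠ 0}
  have hS : UniqueDiffWithinAt ℂ S 0 :=
    uniqueDiffWithinAt_setOf_add_mul_ne_zero (fun p : ℤ × ℤ => hw p.1 p.2) _ 0
  have hline (q : ℤ) : HasDerivWithinAt
      (fun t : ℂ => W n q (window k n (w · q) + t • window k n (v · q)))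
      (fderiv ℂ (W n q) (window k n (w · q)) (window k n (v · q))) S 0 :=
    ((hdiff n q _ fun i => hw _ q).hasFDerivAt.hasLineDerivAt _).hasDerivWithinAt
  have heq : ∀ t ∈ S, W n (m + 1) (window k n (w · (m + 1)) + t • window k n (v · (m + 1))) =
      W n m (window k n (w · m) + t • window k n (v · m)) := fun t ht =>
    hinv _ (hE t) (fun p q => ht (p, q)) n m
  exact hS.eq_deriv S (hline (m + 1))
    ((hline m).congr heq (heq 0 fun p => by simpa using hw p.1 p.2))

variable {α : ℂ}

lemma exists_isNextRow_window_mem (hα : α ≠ 0) (hW : IsFirstIntegralN (LinSol α) k W)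
    {n m : ℤ} {r : ℤ → ℂ} (hr : window k n r ∈ nullDirections (W n m)) :
    ∃ s, IsNextRow α r s ∧ (∀ i, s i ≠ 0) ∧ window k n s ∈ nullDirections (W n (m + 1)) := by
  obtain ⟨v, hv, rfl, hv0⟩ := exists_linSol_row_eq hα m r
  refine ⟨(v · (m + 1)), fun i => hv i m, fun i => hv0 i _ (by omega),
    mem_nullDirections.mpr fun y hy => ?_⟩
  obtain ⟨s, rfl, hs⟩ := exists_window_eq n y
  obtain ⟨w, hw, rfl, hw0⟩ := exists_linSol_row_eq hα (m + 1) s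
  have hw_ne : ∀ p q, w p q ≠ 0 := fun p q => by
    by_cases hq : q = m + 1
    · obtain ⟨i, hi⟩ := hs p
      exact hq ▸ hi.trans_ne (hy i)
    · exact hw0 p q hq
  rw [hW.fderiv_window_succ hw_ne (hw.add_const_mul hv)]
  exact mem_nullDirections.mp hr _ fun i => hw_ne _ m

lemma neg_one_pow_mem_nullDirections (hα : α ≠ 0) (hW : IsFirstIntegralN (LinSol α) k W)
    (n m : ℤ) : (fun i : Fin (k + 1) => (-1) ^ (i : ℕ)) ∈ nullDirections (W n m) := by
  obtain ⟨s, hs, hs0, hmem⟩ := hW.exists_isNextRow_window_mem hα (n := n) (m := m - 1) (r := 0)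
    (by simp)
  rw [sub_add_cancel] at hmem
  have hs_eq := eq_smul_neg_one_pow (d := window k n s) fun i => by
    simpa using hs.window_succ_add n i
  rwa [hs_eq, Submodule.smul_mem_iff _ (show window k n s 0 ≠ 0 from hs0 _)] at hmem

lemma mem_nullDirections_succ (hα : α ≠ 0) (hW : IsFirstIntegralN (LinSol α) k W) {n m : ℤ}
    {ξ η : Fin (k + 1) → ℂ} (hξ : ξ ∈ nullDirections (W n m))
    (h : ∀ i : Fin k,
      η i.succ + η i.castSucc = α ^ (n + ((i : ℕ) : ℤ)) * (ξ i.succ - ξ i.castSucc)) :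
    η ∈ nullDirections (W n (m + 1)) := by
  obtain ⟨r, rfl, -⟩ := exists_window_eq n ξ
  obtain ⟨s, hs, -, hmem⟩ := hW.exists_isNextRow_window_mem hα hξ
  have hdiff := eq_smul_neg_one_pow (d := η - window k n s) fun i => by
    simp only [Pi.sub_apply]
    linear_combination h i - hs.window_succ_add n i
  rw [← sub_add_cancel η (window k n s), hdiff]
  exact add_mem (Submodule.smul_mem _ _ (hW.neg_one_pow_mem_nullDirections hα n _)) hmem

end IsFirstIntegralN

/-! ### Gaussian binomial coefficients -/

/-- The Gaussian binomial coefficient `[i choose j]_q`, defined by the Pascal rule so that it makes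
sense at roots of unity. -/
def gaussBinom {R : Type*} [Semiring R] (q : R) : ℕ → ℕ → R
  | _, 0 => 1
  | 0, _ + 1 => 0
  | i + 1, j + 1 => gaussBinom q i j + q ^ (j + 1) * gaussBinom q i (j + 1)

section gaussBinom

variable {R : Type*} [Semiring R] (q : R)

lemma gaussBinom_zero_right (i : ℕ) : gaussBinom q i 0 = 1 := by
  cases i <;> rfl

lemma gaussBinom_zero_succ (j : ℕ) : gaussBinom q 0 (j + 1) = 0 := rfl

lemma gaussBinom_succ_succ (i j : ℕ) : gaussBinom q (i + 1) (j + 1) =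
    gaussBinom q i j + q ^ (j + 1) * gaussBinom q i (j + 1) := rfl

lemma gaussBinom_eq_zero_of_lt {i j : ℕ} (h : i < j) : gaussBinom q i j = 0 := by
  induction i generalizing j with
  | zero => cases j with
    | zero => omega
    | succ j => exact gaussBinom_zero_succ q j
  | succ i ih => cases j with
    | zero => omega
    | succ j => rw [gaussBinom_succ_succ, ih (by omega), ih (by omega), mul_zero, add_zero]

lemma gaussBinom_self (j : ℕ) : gaussBinom q j j = 1 := by
  induction j with
  | zero => rfl
  | succ j ih =>
    rw [gaussBinom_succ_succ, ih, gaussBinom_eq_zero_of_lt q j.lt_succ_self, mul_zero, add_zero]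

end gaussBinom

/- The second Pascal rule `[i + 1 choose j + 1] = q ^ (i - j) [i choose j] + [i choose j + 1]`,
multiplied by `q ^ j` to avoid the truncated subtraction. -/
lemma pow_mul_gaussBinom_succ_succ {R : Type*} [CommSemiring R] (q : R) (i j : ℕ) :
    q ^ j * gaussBinom q (i + 1) (j + 1) =
      q ^ i * gaussBinom q i j + q ^ j * gaussBinom q i (j + 1) := by
  induction i generalizing j with
  | zero =>
    cases j <;> simp [gaussBinom_zero_right, gaussBinom_zero_succ, gaussBinom_succ_succ]
  | succ i ih =>
    cases j with
    | zero =>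
      have h := ih 0
      simp only [pow_zero, one_mul, gaussBinom_zero_right, mul_one] at h ⊢
      calc gaussBinom q (i + 2) 1
        _ = 1 + q * (q ^ i + gaussBinom q i 1) := by
          rw [gaussBinom_succ_succ, gaussBinom_zero_right, zero_add, pow_one, h]
        _ = q ^ (i + 1) + gaussBinom q (i + 1) 1 := by
          rw [gaussBinom_succ_succ, gaussBinom_zero_right]
          ring
    | succ j =>
      calc q ^ (j + 1) * gaussBinom q (i + 2) (j + 2)
        _ = q * (q ^ j * gaussBinom q (i + 1) (j + 1)) +
            q ^ (j + 2) * (q ^ (j + 1) * gaussBinom q (i + 1) (j + 2)) := by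
          rw [gaussBinom_succ_succ]
          ring
        _ = q ^ (i + 1) * (gaussBinom q i j + q ^ (j + 1) * gaussBinom q i (j + 1)) +
            q ^ (j + 1) * (gaussBinom q i (j + 1) + q ^ (j + 2) * gaussBinom q i (j + 2)) := by
          rw [ih j, ih (j + 1)]
          ring
        _ = q ^ (i + 1) * gaussBinom q (i + 1) (j + 1) +
            q ^ (j + 1) * gaussBinom q (i + 1) (j + 2) := by
          rw [gaussBinom_succ_succ q i j, gaussBinom_succ_succ q i (j + 1)]

lemma pow_mul_gaussBinom_succ_sub {R : Type*} [CommRing R] (q : R) (i j : ℕ) :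
    q ^ j * (gaussBinom q (i + 1) j - gaussBinom q i j) =
      q * q ^ i * (gaussBinom q (i + 1) j - q ^ j * gaussBinom q i j) := by
  cases j with
  | zero => simp [gaussBinom_zero_right]
  | succ j =>
    have h := pow_mul_gaussBinom_succ_succ q i j
    rw [gaussBinom_succ_succ] at h ⊢
    linear_combination q * h

/-- The sequence `i ↦ (-1) ^ i * [i choose j]_q`, whose restriction to `0 ≤ i ≤ k` is the
direction reached at stage `j` of the propagation of null directions along `L_q`. -/
def altGaussBinom {R : Type*} [Ring R] (q : R) (j i : ℕ) : R :=
  (-1) ^ i * gaussBinom q i j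

/-! ### Null directions of a first integral -/

lemma Kfun_eq {α : ℂ} (hα : α ≠ 0) (n : ℤ) (j : ℕ) :
    Kfun α n j = α ^ n * (α ^ j * (1 + α ^ j)) := by
  rw [Kfun]
  split_ifs with hj
  · rw [hj]
    ring
  · rw [zpow_add₀ hα, zpow_natCast]
    ring

lemma Kfun_eq_zero_iff {α : ℂ} (hα : α ≠ 0) (n : ℤ) (j : ℕ) :
    Kfun α n j = 0 ↔ α ^ j = -1 := by
  rw [Kfun_eq hα, mul_eq_zero_iff_left (zpow_ne_zero n hα),
    mul_eq_zero_iff_left (pow_ne_zero j hα), add_comm, add_eq_zero_iff_eq_neg]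

/- This is `IsNextRow` for the row `altGaussBinom α j` followed by
`K(n, j) * altGaussBinom α (j + 1) + α ^ (n + j - 1) * altGaussBinom α j`, read from site `n`. -/
lemma Kfun_mul_altGaussBinom_succ_add {α : ℂ} (hα : α ≠ 0) (n : ℤ) (i j : ℕ) :
    Kfun α n j * (altGaussBinom α (j + 1) (i + 1) + altGaussBinom α (j + 1) i) +
        α ^ (n + (j : ℤ) - 1) * (altGaussBinom α j (i + 1) + altGaussBinom α j i) =
      α ^ (n + (i : ℤ)) * (altGaussBinom α j (i + 1) - altGaussBinom α j i) := by
  have h₁ := pow_mul_gaussBinom_succ_succ α i j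
  have h₂ := pow_mul_gaussBinom_succ_sub α i j
  simp only [Kfun_eq hα, altGaussBinom, pow_succ (-1 : ℂ), zpow_sub_one₀ hα, zpow_add₀ hα,
    zpow_natCast]
  field_simp
  linear_combination -(1 + α ^ j) * α * h₁ - h₂

namespace IsFirstIntegralN

variable {k : ℕ} {W : ℤ → ℤ → (Fin (k + 1) → ℂ) → ℂ} {α : ℂ}

lemma altGaussBinom_mem_nullDirections (hα : α ≠ 0) (hW : IsFirstIntegralN (LinSol α) k W)
    {n : ℤ} {j : ℕ} (hK : ∀ l < j, Kfun α n l ≠ 0) (m : ℤ) :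
    (fun i : Fin (k + 1) => altGaussBinom α j i) ∈ nullDirections (W n m) := by
  induction j generalizing m with
  | zero =>
    simpa [altGaussBinom, gaussBinom_zero_right] using hW.neg_one_pow_mem_nullDirections hα n m
  | succ j ih =>
    have hj := ih fun l hl => hK l (by omega)
    have hnext := hW.mem_nullDirections_succ hα (hj (m - 1))
      (η := Kfun α n j • (fun i : Fin (k + 1) => altGaussBinom α (j + 1) i) +
        α ^ (n + (j : ℤ) - 1) • fun i : Fin (k + 1) => altGaussBinom α j i) fun i => by
      have h := Kfun_mul_altGaussBinom_succ_add hα n i j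
      simp only [Pi.add_apply, Pi.smul_apply, smul_eq_mul, Fin.val_succ, Fin.val_castSucc]
      linear_combination h
    rwa [sub_add_cancel, Submodule.add_mem_iff_left _ (Submodule.smul_mem _ _ (hj m)),
      Submodule.smul_mem_iff _ (hK j j.lt_succ_self)] at hnext

lemma single_last_mem_nullDirections (hα : α ≠ 0) (hW : IsFirstIntegralN (LinSol α) k W)
    {n : ℤ} (hK : ∀ l < k, Kfun α n l ≠ 0) (m : ℤ) :
    Pi.single (Fin.last k) 1 ∈ nullDirections (W n m) := by
  have hlast : (fun i : Fin (k + 1) => altGaussBinom α k i) =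
      (-1 : ℂ) ^ k • Pi.single (Fin.last k) 1 := by
    ext i
    induction i using Fin.lastCases with
    | last => simp [altGaussBinom, gaussBinom_self]
    | cast i => simp [altGaussBinom, gaussBinom_eq_zero_of_lt]
  have hmem := hW.altGaussBinom_mem_nullDirections hα hK m
  rwa [hlast, Submodule.smul_mem_iff _ (pow_ne_zero k (neg_ne_zero.mpr one_ne_zero))] at hmem

end IsFirstIntegralN

/-- If `L_α` possesses a first integral of order `k̂` in the `n`-direction, then
`K(n,k̃) = 0` for some `0 ≤ k̃ < k̂` and all `n`; equivalently (since `α ≠ 0`),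
`α^j = −1` for some `1 ≤ j < k̂`. -/
theorem necessary_condition_n_direction (α : ℂ) (hα : α ≠ 0) (khat : ℕ) (hk : 1 ≤ khat)
    (W : ℤ → ℤ → (Fin (khat + 1) → ℂ) → ℂ)
    (hW : IsFirstIntegralN (LinSol α) khat W) :
    (∃ kt : ℕ, kt < khat ∧ ∀ n : ℤ, Kfun α n kt = 0)
    ∧ (∃ j : ℕ, 1 ≤ j ∧ j < khat ∧ α ^ j = -1) := by
  obtain ⟨n, m, x, hx, hlast⟩ := hW.2.2.2
  obtain ⟨j, hjk, hK⟩ : ∃ j < khat, Kfun α n j = 0 := by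
    by_contra! hK
    exact hlast (mem_nullDirections.mp (hW.single_last_mem_nullDirections hα hK m) x hx)
  have hpow : α ^ j = -1 := (Kfun_eq_zero_iff hα n j).mp hK
  have hj : j ≠ 0 := by
    rintro rfl
    norm_num at hpow
  exact ⟨⟨j, hjk, fun n' => (Kfun_eq_zero_iff hα n' j).mpr hpow⟩,
    j, Nat.one_le_iff_ne_zero.mpr hj, hjk, hpow⟩
end

section
/- Let N ≥ 1 and let α ∈ ℂ satisfy α^N = −1 and α^j ≠ −1 for all 1 ≤ j < N. If the linear equation L_α possesses a first integral of order k̂ in the n-direction, then k̂ ≥ N + 1. -/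
/-!
On consecutive rows `x`, `y` of a solution the equation is a linear relation between segments of
length `k + 1`, and every pair of nowhere vanishing related segments occurs in a nowhere vanishing
solution. Differentiating the invariance `W n (m + 1) y = W n m x` along this relation shows that
the space of directions annihilated by all the differentials `d(W n m)`, with `n` fixed, is stable
under the relation. The relation sends `0` to the geometric segment of ratio `-1`, and the geometric
segment of ratio `r ≠ 1` to a nonzero multiple of a geometric segment of ratio `α r`. So the ratios
`-1, -α, -α², …` all give annihilated directions as long as the value `1` is not reached, and by
Vandermonde `k + 1` distinct ratios force every `d(W n m)` to vanish. When `-1 = α ^ N` with `N`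
minimal, `1` is first reached at `-α ^ N` and the ratios up to it are distinct, so `k ≤ N` is
impossible.
-/

section Chains

variable {T : Type*} {R : ℤ → T → T → Prop}

theorem exists_int_chain_through (hright : ∀ j t, ∃ t', R j t t') (hleft : ∀ j t', ∃ t, R j t t')
    (n : ℤ) (t : T) : ∃ f : ℤ → T, f n = t ∧ ∀ j, R j (f j) (f (j + 1)) := by
  choose next hnext using hright
  choose prev hprev using hleft
  let f : ℤ → T := fun j =>
    Int.inductionOn' j n t (fun j _ s => next j s) (fun j _ s => prev (j - 1) s)
  refine ⟨f, Int.inductionOn'_self, fun j => ?_⟩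
  rcases le_or_gt n j with hj | hj
  · have hf : f (j + 1) = next j (f j) := Int.inductionOn'_add_one hj
    exact hf ▸ hnext j (f j)
  · have hf : f (j + 1 - 1) = prev (j + 1 - 1) (f (j + 1)) := Int.inductionOn'_sub_one hj
    rw [add_sub_cancel_right] at hf
    exact hf ▸ hprev j (f (j + 1))

theorem exists_int_chain_extending (hright : ∀ j t, ∃ t', R j t t')
    (hleft : ∀ j t', ∃ t, R j t t') (n : ℤ) {k : ℕ} (p : Fin (k + 1) → T)
    (hp : ∀ i : Fin k, R (n + (i : ℕ)) (p i.castSucc) (p i.succ)) :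
    ∃ f : ℤ → T, (∀ i : Fin (k + 1), f (n + (i : ℕ)) = p i) ∧ ∀ j, R j (f j) (f (j + 1)) := by
  induction k with
  | zero =>
    obtain ⟨f, hfn, hf⟩ := exists_int_chain_through hright hleft n (p 0)
    exact ⟨f, fun i => by simpa [Fin.fin_one_eq_zero i] using hfn, hf⟩
  | succ k ih =>
    obtain ⟨f, hfp, hf⟩ := ih (fun i => p i.castSucc) fun i => hp i.castSucc
    obtain ⟨g, hgp, hg⟩ :=
      exists_int_chain_through hright hleft (n + k + 1) (p (Fin.last (k + 1)))
    refine ⟨fun j => if j ≤ n + k then f j else g j, fun i => ?_, fun j => ?_⟩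
    · induction i using Fin.lastCases with
      | last => simpa [← add_assoc] using hgp
      | cast i => simpa [Nat.le_of_lt_succ i.isLt] using hfp i
    · rcases lt_trichotomy j (n + k) with hj | rfl | hj
      · simpa [hj.le, Int.add_one_le_of_lt hj] using hf j
      · simpa [hgp, ← hfp (Fin.last k)] using hp (Fin.last k)
      · simpa [hj.not_ge, (hj.trans (lt_add_one j)).not_ge] using hg j

end Chains

instance inst_s11 : Uncountable ℂ := Set.not_countable_univ_iff.1 not_countable_complex

section Relations

variable {A : Type*} [CommRing A]

/-- `X` and `Y` are consecutive rows of a solution of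
`v (n + 1) (m + 1) + v n (m + 1) = a n * (v (n + 1) m - v n m)`; for `L_α`, `a n = α ^ n`. -/
def RowRel (a X Y : ℤ → A) : Prop :=
  ∀ j, Y (j + 1) + Y j = a j * (X (j + 1) - X j)

/-- The restriction of `RowRel` to the columns `n, …, n + k`: the `i`-th entry of a segment sits
in column `n + i`. -/
def SegmentRel (a : ℤ → A) (n : ℤ) {k : ℕ} (x y : Fin (k + 1) → A) : Prop :=
  ∀ i : Fin k, y i.succ + y i.castSucc = a (n + (i : ℕ)) * (x i.succ - x i.castSucc)

theorem RowRel.segmentRel {a X Y : ℤ → A} (h : RowRel a X Y) (n : ℤ) (k : ℕ) :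
    SegmentRel a n (fun i : Fin (k + 1) => X (n + (i : ℕ))) (fun i => Y (n + (i : ℕ))) := by
  intro i
  simpa [add_assoc] using h (n + (i : ℕ))

theorem SegmentRel.add_smul {a : ℤ → A} {n : ℤ} {k : ℕ} {x y u w : Fin (k + 1) → A}
    (hxy : SegmentRel a n x y) (huw : SegmentRel a n u w) (t : A) :
    SegmentRel a n (x + t • u) (y + t • w) := by
  intro i
  simp only [Pi.add_apply, Pi.smul_apply, smul_eq_mul]
  linear_combination hxy i + t * huw i

theorem segmentRel_zero_neg_one_pow (a : ℤ → A) (n : ℤ) (k : ℕ) :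
    SegmentRel a n 0 (fun i : Fin (k + 1) => (-1) ^ (i : ℕ)) := by
  intro i
  simp [pow_succ]

end Relations

section Rows

variable {K : Type*} [Field K]

theorem exists_forall_add_mul_ne_zero [Uncountable K] {ι : Type*} [Countable ι] (g : ι → K)
    (s : ι → Kˣ) : ∃ c : K, ∀ i, g i + c * s i ≠ 0 := by
  have hbad : Set.range (fun i => -g i / s i) ≠ Set.univ := fun h =>
    Set.not_countable_univ (h ▸ Set.countable_range _)
  obtain ⟨c, hc⟩ := (Set.ne_univ_iff_exists_notMem _).1 hbad
  refine ⟨c, fun i hi => hc ⟨i, ?_⟩⟩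
  rw [div_eq_iff (s i).ne_zero]
  linear_combination -hi

-- A particular solution plus a generic multiple of a solution of the homogeneous recurrence.
theorem exists_units_linear_recurrence [Uncountable K] (c : ℤ → Kˣ) (b : ℤ → K) :
    ∃ f : ℤ → Kˣ, ∀ j, (f (j + 1) : K) = c j * f j + b j := by
  obtain ⟨p, -, hp⟩ := exists_int_chain_through (R := fun j s t => t = c j * s + b j)
    (fun j s => ⟨c j * s + b j, rfl⟩) (fun j t => ⟨(c j)⁻¹ * (t - b j), by simp⟩) 0 (0 : K)
  obtain ⟨s, -, hs⟩ := exists_int_chain_through (R := fun j s t => t = c j * s)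
    (fun j s => ⟨c j * s, rfl⟩) (fun j t => ⟨(c j)⁻¹ * t, by simp⟩) 0 (1 : Kˣ)
  obtain ⟨d, hd⟩ := exists_forall_add_mul_ne_zero p s
  refine ⟨fun j => Units.mk0 _ (hd j), fun j => ?_⟩
  simp only [Units.val_mk0, hp j, hs j, Units.val_mul]
  ring

theorem exists_units_next_row [Uncountable K] (a X : ℤ → K) :
    ∃ Y : ℤ → Kˣ, RowRel a X (fun j => Y j) := by
  obtain ⟨Y, hY⟩ :=
    exists_units_linear_recurrence (fun _ => -1) fun j => a j * (X (j + 1) - X j)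
  refine ⟨Y, fun j => ?_⟩
  simp [hY j]

theorem exists_units_prev_row [Uncountable K] {a : ℤ → K} (ha : ∀ j, a j ≠ 0) (Y : ℤ → K) :
    ∃ X : ℤ → Kˣ, RowRel a (fun j => X j) Y := by
  obtain ⟨X, hX⟩ :=
    exists_units_linear_recurrence (fun _ => 1) fun j => (Y (j + 1) + Y j) / a j
  refine ⟨X, fun j => ?_⟩
  simp [hX j, mul_div_cancel₀ _ (ha j)]

theorem exists_units_prev_segment [Uncountable K] {a : ℤ → K} (ha : ∀ j, a j ≠ 0) (n : ℤ) {k : ℕ}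
    (y : Fin (k + 1) → K) : ∃ x : Fin (k + 1) → Kˣ, SegmentRel a n (fun i => x i) y := by
  obtain ⟨X, hX⟩ := exists_units_prev_row ha fun j => y (Fin.clamp (j - n).toNat k)
  have hclamp (i : Fin (k + 1)) : Fin.clamp (i : ℕ) k = i :=
    Fin.ext (min_eq_left (Nat.le_of_lt_succ i.isLt))
  refine ⟨fun i => X (n + (i : ℕ)), ?_⟩
  simpa [hclamp] using hX.segmentRel n k

theorem exists_units_add_eq_mul_sub_right [Infinite K] {a : K} (ha : a ≠ 0) (p q : K) :
    ∃ p' q' : Kˣ, (q' + q : K) = a * (p' - p) := by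
  obtain ⟨c, hc⟩ := (Set.toFinite {0, p + q / a}).exists_notMem
  simp only [Set.mem_insert_iff, Set.mem_singleton_iff, not_or] at hc
  have hq' : a * (c - p) - q ≠ 0 := fun h => hc.2 (by field_simp; linear_combination h)
  exact ⟨Units.mk0 c hc.1, Units.mk0 _ hq', by simp⟩

theorem exists_units_add_eq_mul_sub_left [Infinite K] {a : K} (ha : a ≠ 0) (p' q' : K) :
    ∃ p q : Kˣ, (q' + q : K) = a * (p' - p) := by
  obtain ⟨p, q, h⟩ := exists_units_add_eq_mul_sub_right (neg_ne_zero.2 ha) p' q'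
  exact ⟨p, q, by linear_combination h⟩

theorem SegmentRel.exists_rowRel [Infinite K] {a : ℤ → K} (ha : ∀ j, a j ≠ 0) {n : ℤ} {k : ℕ}
    {x y : Fin (k + 1) → Kˣ} (h : SegmentRel a n (fun i => x i) (fun i => y i)) :
    ∃ X Y : ℤ → Kˣ, RowRel a (fun j => X j) (fun j => Y j) ∧
      (∀ i : Fin (k + 1), X (n + (i : ℕ)) = x i) ∧ ∀ i : Fin (k + 1), Y (n + (i : ℕ)) = y i := by
  obtain ⟨f, hf, hrel⟩ := exists_int_chain_extending (T := Kˣ × Kˣ)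
    (R := fun j s t => (t.2 + s.2 : K) = a j * (t.1 - s.1))
    (fun j s => Prod.exists.2 (exists_units_add_eq_mul_sub_right (ha j) s.1 s.2))
    (fun j t => Prod.exists.2 (exists_units_add_eq_mul_sub_left (ha j) t.1 t.2))
    n (fun i => (x i, y i)) h
  exact ⟨fun j => (f j).1, fun j => (f j).2, hrel,
    fun i => congrArg Prod.fst (hf i), fun i => congrArg Prod.snd (hf i)⟩

theorem segmentRel_geometric {α : K} (hα : α ≠ 0) (n : ℤ) (k : ℕ) (r : K) :
    SegmentRel (α ^ ·) n ((α * r + 1) • fun i : Fin (k + 1) => r ^ (i : ℕ))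
      ((α ^ n * (r - 1)) • fun i : Fin (k + 1) => (α * r) ^ (i : ℕ)) := by
  intro i
  simp only [Pi.smul_apply, smul_eq_mul, Fin.val_succ, Fin.val_castSucc, zpow_add₀ hα,
    zpow_natCast]
  ring

theorem span_range_pow_eq_top {k : ℕ} {v : Fin k → K} (hv : Function.Injective v) :
    Submodule.span K (Set.range fun j (i : Fin k) => v j ^ (i : ℕ)) = ⊤ :=
  (Matrix.linearIndependent_rows_of_det_ne_zero
    (Matrix.det_vandermonde_ne_zero_iff.2 hv)).span_eq_top_of_card_eq_finrank' (by simp)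

end Rows

theorem SegmentRel.exists_linSol {α : ℂ} (hα : α ≠ 0) {n : ℤ} (m : ℤ) {k : ℕ}
    {x y : Fin (k + 1) → ℂ} (hx : ∀ i, x i ≠ 0) (hy : ∀ i, y i ≠ 0)
    (h : SegmentRel (α ^ ·) n x y) :
    ∃ w : ℤ → ℤ → ℂ, LinSol α w ∧ (∀ n m, w n m ≠ 0) ∧
      (∀ i : Fin (k + 1), w (n + (i : ℕ)) m = x i) ∧
      ∀ i : Fin (k + 1), w (n + (i : ℕ)) (m + 1) = y i := by
  have hα' (j : ℤ) : α ^ j ≠ 0 := zpow_ne_zero j hα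
  lift x to Fin (k + 1) → ℂˣ using fun i => (hx i).isUnit
  lift y to Fin (k + 1) → ℂˣ using fun i => (hy i).isUnit
  obtain ⟨X, Y, hXY, hXx, hYy⟩ := h.exists_rowRel hα'
  obtain ⟨w, hw, hrel⟩ := exists_int_chain_extending (T := ℤ → ℂˣ)
    (R := fun _ X Y => RowRel (α ^ ·) (fun j => (X j : ℂ)) fun j => Y j)
    (fun _ X => exists_units_next_row _ _) (fun _ Y => exists_units_prev_row hα' _)
    m ![X, Y] (fun i => by simpa [Fin.fin_one_eq_zero i] using hXY)
  have hwX : w m = X := by simpa using hw 0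
  have hwY : w (m + 1) = Y := by simpa using hw 1
  exact ⟨fun n m => w m n, fun n m => hrel m n, fun n m => (w m n).ne_zero,
    fun i => by simp only [hwX, hXx],
    fun i => by simp only [hwY, hYy]⟩

theorem eventually_forall_add_smul_ne_zero {R ι : Type*} [Semiring R] [TopologicalSpace R]
    [IsTopologicalSemiring R] [T1Space R] [Finite ι] {x : ι → R} (hx : ∀ i, x i ≠ 0) (u : ι → R) :
    ∀ᶠ t : R in nhds 0, ∀ i, (x + t • u) i ≠ 0 := by
  refine Filter.eventually_all.2 fun i => ?_
  have hcont : Continuous fun t : R => (x + t • u) i := by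
    simp only [Pi.add_apply, Pi.smul_apply, smul_eq_mul]
    fun_prop
  exact hcont.continuousAt.eventually_ne (by simpa using hx i)

/-- The directions annihilated by the differentials of all the `W n m`, with `n` fixed, at all
points with nonzero coordinates. -/
noncomputable def annihilatedDirections {k : ℕ} (W : ℤ → ℤ → (Fin (k + 1) → ℂ) → ℂ) (n : ℤ) :
    Submodule ℂ (Fin (k + 1) → ℂ) :=
  ⨅ (m : ℤ) (x : Fin (k + 1) → ℂ) (_ : ∀ i, x i ≠ 0), (fderiv ℂ (W n m) x).ker

theorem mem_annihilatedDirections {k : ℕ} {W : ℤ → ℤ → (Fin (k + 1) → ℂ) → ℂ} {n : ℤ}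
    {u : Fin (k + 1) → ℂ} : u ∈ annihilatedDirections W n ↔
      ∀ (m : ℤ) (x : Fin (k + 1) → ℂ), (∀ i, x i ≠ 0) → fderiv ℂ (W n m) x u = 0 := by
  simp [annihilatedDirections, Submodule.mem_iInf]

namespace IsFirstIntegralN

variable {α : ℂ} {k : ℕ} {W : ℤ → ℤ → (Fin (k + 1) → ℂ) → ℂ}

theorem apply_eq_of_segmentRel (hW : IsFirstIntegralN (LinSol α) k W) (hα : α ≠ 0) {n : ℤ} (m : ℤ)
    {x y : Fin (k + 1) → ℂ} (hx : ∀ i, x i ≠ 0) (hy : ∀ i, y i ≠ 0)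
    (hxy : SegmentRel (α ^ ·) n x y) : W n (m + 1) y = W n m x := by
  obtain ⟨w, hw, hw0, hwx, hwy⟩ := hxy.exists_linSol hα m hx hy
  simpa only [hwx, hwy] using hW.2.1 w hw hw0 n m

theorem fderiv_eq_of_segmentRel (hW : IsFirstIntegralN (LinSol α) k W) (hα : α ≠ 0) {n : ℤ} (m : ℤ)
    {x y u w : Fin (k + 1) → ℂ} (hx : ∀ i, x i ≠ 0) (hy : ∀ i, y i ≠ 0)
    (hxy : SegmentRel (α ^ ·) n x y) (huw : SegmentRel (α ^ ·) n u w) :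
    fderiv ℂ (W n (m + 1)) y w = fderiv ℂ (W n m) x u := by
  rw [← (hW.1 n (m + 1) y hy).lineDeriv_eq_fderiv, ← (hW.1 n m x hx).lineDeriv_eq_fderiv]
  refine Filter.EventuallyEq.deriv_eq ?_
  filter_upwards [eventually_forall_add_smul_ne_zero hx u,
    eventually_forall_add_smul_ne_zero hy w] with t hxt hyt
  exact hW.apply_eq_of_segmentRel hα m hxt hyt (hxy.add_smul huw t)

theorem mem_annihilatedDirections_of_segmentRel (hW : IsFirstIntegralN (LinSol α) k W)
    (hα : α ≠ 0) {n : ℤ} {u w : Fin (k + 1) → ℂ} (huw : SegmentRel (α ^ ·) n u w)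
    (hu : u ∈ annihilatedDirections W n) : w ∈ annihilatedDirections W n := by
  rw [mem_annihilatedDirections] at hu ⊢
  intro m y hy
  obtain ⟨x, hxy⟩ := exists_units_prev_segment (fun j => zpow_ne_zero j hα) n y
  have hx (i : Fin (k + 1)) : (x i : ℂ) ≠ 0 := (x i).ne_zero
  rw [← sub_add_cancel m 1, hW.fderiv_eq_of_segmentRel hα (m - 1) hx hy hxy huw, hu _ _ hx]

theorem geometric_mem_annihilatedDirections (hW : IsFirstIntegralN (LinSol α) k W) (hα : α ≠ 0)
    (n : ℤ) {j : ℕ} (hj : ∀ i < j, α ^ i ≠ -1) :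
    (fun i : Fin (k + 1) => (-α ^ j) ^ (i : ℕ)) ∈ annihilatedDirections W n := by
  induction j with
  | zero =>
    rw [pow_zero]
    exact hW.mem_annihilatedDirections_of_segmentRel hα
      (segmentRel_zero_neg_one_pow _ n k) (Submodule.zero_mem _)
  | succ j ih =>
    have hprev := ih fun i hi => hj i (hi.trans j.lt_succ_self)
    have hmul := hW.mem_annihilatedDirections_of_segmentRel hα
      (segmentRel_geometric hα n k (-α ^ j)) (Submodule.smul_mem _ _ hprev)
    have hcoeff : α ^ n * (-α ^ j - 1) ≠ 0 :=
      mul_ne_zero (zpow_ne_zero n hα) fun h => hj j j.lt_succ_self (by linear_combination -h)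
    rwa [mul_neg, ← pow_succ', Submodule.smul_mem_iff _ hcoeff] at hmul

theorem annihilatedDirections_ne_top {E : (ℤ → ℤ → ℂ) → Prop} (hW : IsFirstIntegralN E k W) :
    ∃ n, annihilatedDirections W n ≠ ⊤ := by
  obtain ⟨n, m, x, hx, hne⟩ := hW.2.2.1
  exact ⟨n, fun htop => hne (mem_annihilatedDirections.1 (htop ▸ Submodule.mem_top) m x hx)⟩

end IsFirstIntegralN

theorem injOn_pow_Iic_of_pow_ne_one {M : Type*} [MonoidWithZero M] [IsLeftCancelMulZero M]
    {a : M} (ha : a ≠ 0) {N : ℕ} (hone : ∀ j, 1 ≤ j → j ≤ N → a ^ j ≠ 1) :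
    Set.InjOn (fun j : ℕ => a ^ j) (Set.Iic N) := by
  have hlt (i j : ℕ) (hij : i < j) (hj : j ≤ N) : a ^ i ≠ a ^ j := by
    intro h
    rw [← pow_mul_pow_sub a hij.le, eq_comm, mul_eq_left₀ (pow_ne_zero i ha)] at h
    exact hone (j - i) (by lia) (by lia) h
  intro i hi j hj h
  rcases lt_trichotomy i j with hij | hij | hij
  · exact absurd h (hlt i j hij hj)
  · exact hij
  · exact absurd h.symm (hlt j i hij hi)

theorem pow_ne_one_of_forall_lt_pow_ne {M : Type*} [Monoid M] {a c : M} (hc : c ≠ 1) {N : ℕ}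
    (hN : a ^ N = c) (hmin : ∀ j, 1 ≤ j → j < N → a ^ j ≠ c) (j : ℕ) (hj : 1 ≤ j) (hjN : j ≤ N) :
    a ^ j ≠ 1 := by
  intro h
  have hsub : a ^ (N - j) = c := by rw [← hN, ← pow_mul_pow_sub a hjN, h, one_mul]
  rcases hjN.eq_or_lt with rfl | hlt
  · exact hc (hN.symm.trans h)
  · exact hmin (N - j) (by lia) (by lia) hsub

theorem order_lower_bound_n_direction_linear_general (N : ℕ) (α : ℂ) (hα : α ≠ 0)
    (hneg : ∀ j : ℕ, 1 ≤ j → j < N → α ^ j ≠ -1) (hone : ∀ j : ℕ, 1 ≤ j → j ≤ N → α ^ j ≠ 1)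
    (k : ℕ) (W : ℤ → ℤ → (Fin (k + 1) → ℂ) → ℂ) (hW : IsFirstIntegralN (LinSol α) k W) :
    N + 1 ≤ k := by
  by_contra! hk
  have hle (j : Fin (k + 1)) : (j : ℕ) ≤ N := by lia
  have hinj : Function.Injective fun j : Fin (k + 1) => -α ^ (j : ℕ) := fun i j h =>
    Fin.ext (injOn_pow_Iic_of_pow_ne_one hα hone (hle i) (hle j) (neg_injective h))
  have hneg₀ (j : ℕ) (hj : j < N) : α ^ j ≠ -1 := by
    rcases j.eq_zero_or_pos with rfl | hpos
    · norm_num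
    · exact hneg j hpos hj
  obtain ⟨n, hn⟩ := hW.annihilatedDirections_ne_top
  refine hn (eq_top_iff.2 ((span_range_pow_eq_top hinj).ge.trans (Submodule.span_le.2 ?_)))
  rintro _ ⟨j, rfl⟩
  exact hW.geometric_mem_annihilatedDirections hα n fun i hi => hneg₀ i (hi.trans_le (hle j))

/-- If `α^N = −1` with `N` minimal, then any `n`-direction first integral of `L_α`
has order at least `N + 1`. -/
theorem order_lower_bound_n_direction_linear (N : ℕ) (hN : 1 ≤ N) (α : ℂ)
    (hαN : α ^ N = -1) (hmin : ∀ j : ℕ, 1 ≤ j → j < N → α ^ j ≠ -1)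
    (khat : ℕ) (hk : 1 ≤ khat)
    (W : ℤ → ℤ → (Fin (khat + 1) → ℂ) → ℂ)
    (hW : IsFirstIntegralN (LinSol α) khat W) :
    N + 1 ≤ khat := by
  have hα : α ≠ 0 := ne_zero_pow (Nat.one_le_iff_ne_zero.1 hN) (by simp [hαN])
  exact order_lower_bound_n_direction_linear_general N α hα hmin
    (pow_ne_one_of_forall_lt_pow_ne (by norm_num) hαN hmin) khat W hW
end

section
/- Let N ≥ 1 and let α ∈ ℂ satisfy α^N = −1. Let v be a solution of the linear equation L_α, and define the second-direction Laplace transforms by v̌_0 = v and v̌_j(n,m) = v̌_{j−1}(n,m+1) − α^{n−j}·v̌_{j−1}(n,m) for j ≥ 1. Then the function Ŵ₂(n,m) := (−1)^n·(v̌_{N−1}(n,m+1) + α^n·v̌_{N−1}(n,m)) satisfies Ŵ₂(n+1,m) = Ŵ₂(n,m) for all n,m ∈ ℤ; that is, Ŵ₂ = (−1)^n·(T₂ + α^n)(T₂ − α^{n−N+1})(T₂ − α^{n−N+2})⋯(T₂ − α^{n−1})v is a first integral of L_α in the m-direction. -/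
/-- The second-direction discrete Laplace transforms:
`v̌_0 = v` and `v̌_j(n,m) = v̌_{j−1}(n,m+1) − α^{n−j}·v̌_{j−1}(n,m)` for `j ≥ 1`. -/
noncomputable def lap2 (α : ℂ) (v : ℤ → ℤ → ℂ) : ℕ → ℤ → ℤ → ℂ
  | 0 => v
  | j + 1 => fun n m => lap2 α v j n (m + 1) - α ^ (n - ((j : ℤ) + 1)) * lap2 α v j n m

/-!
Write `v n` for the sequence `m ↦ v(n,m)`, `T` for the shift in `m`, and `aₙ = αⁿ`. The equation
reads `(T - aₙ) v (n + 1) = -(T + aₙ) v n`, and the `j`-th Laplace transform at `n` is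
`(T - aₙ₋ⱼ) ⋯ (T - aₙ₋₁) v n`. At `n + 1` the last factor of the product is `T - aₙ`, which the
equation trades for `-(T + aₙ)` acting on `v n`; as the factors commute, the `(j + 1)`-st transform
at `n + 1` is `-(T + aₙ)` applied to the `j`-th transform at `n`. Since `α ^ N = -1` makes `a`
antiperiodic, the prefactor `T + aₙ` of `Ŵ₂` is `T - α ^ (n - N)`, the next factor of the product,
so `(-1)ⁿ Ŵ₂` is the `N`-th transform. Hence it changes sign under `n ↦ n + 1`.
-/

section Operator

variable {R M : Type*} [CommRing R] [AddCommGroup M] [Module R M]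

/-- The equation `L_α` for a sequence `v` in `n` with values in an arbitrary module: the operator
`T` replaces the shift in `m`, and the sequence `a` replaces the coefficients `n ↦ α ^ n`. -/
def IsLinSol (T : M →ₗ[R] M) (a : ℤ → R) (v : ℤ → M) : Prop :=
  ∀ n, T (v (n + 1)) + T (v n) = a n • (v (n + 1) - v n)

/-- The discrete Laplace transforms of `v` for an operator `T` and coefficients `a`. The recursion
has the indexing of `lap2`, so step `j + 1` applies `T - a (n - (j + 1))`. -/
def discreteLaplace (T : M →ₗ[R] M) (a : ℤ → R) (v : ℤ → M) : ℕ → ℤ → M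
  | 0, n => v n
  | j + 1, n =>
    T (discreteLaplace T a v j n) - a (n - ((j : ℤ) + 1)) • discreteLaplace T a v j n

variable {T : M →ₗ[R] M} {a : ℤ → R} {v : ℤ → M}

theorem IsLinSol.discreteLaplace_succ_add_one (hv : IsLinSol T a v) (j : ℕ) (n : ℤ) :
    discreteLaplace T a v (j + 1) (n + 1) =
      -(T (discreteLaplace T a v j n) + a n • discreteLaplace T a v j n) := by
  induction j with
  | zero =>
    simp only [discreteLaplace, Nat.cast_zero, zero_add, add_sub_cancel_right]
    linear_combination (norm := module) hv n
  | succ j ih =>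
    have hindex : n + 1 - (((j + 1 : ℕ) : ℤ) + 1) = n - ((j : ℤ) + 1) := by lia
    rw [discreteLaplace, ih, hindex]
    simp only [discreteLaplace, map_neg, map_add, map_sub, map_smul]
    module

theorem discreteLaplace_succ_of_antiperiodic {j : ℕ}
    (ha : Function.Antiperiodic a ((j : ℤ) + 1)) (n : ℤ) :
    discreteLaplace T a v (j + 1) n =
      T (discreteLaplace T a v j n) + a n • discreteLaplace T a v j n := by
  rw [discreteLaplace, ha.sub_eq, neg_smul, sub_neg_eq_add]

theorem explicit_first_integral_m_direction_general {N : ℕ} (hN : 1 ≤ N)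
    (ha : Function.Antiperiodic a (N : ℤ)) (hv : IsLinSol T a v) (n : ℤ) :
    (n + 1).negOnePow • (T (discreteLaplace T a v (N - 1) (n + 1)) +
        a (n + 1) • discreteLaplace T a v (N - 1) (n + 1)) =
      n.negOnePow • (T (discreteLaplace T a v (N - 1) n) +
        a n • discreteLaplace T a v (N - 1) n) := by
  obtain ⟨k, rfl⟩ := Nat.exists_eq_add_of_le' hN
  push_cast at ha
  rw [Nat.add_sub_cancel, ← discreteLaplace_succ_of_antiperiodic ha (n + 1),
    hv.discreteLaplace_succ_add_one, Int.negOnePow_succ, Units.neg_smul, smul_neg, neg_neg]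

end Operator

theorem antiperiodic_zpow_of_pow_eq_neg_one {K : Type*} [DivisionRing K] {x : K} {N : ℕ}
    (hN : N ≠ 0) (hx : x ^ N = -1) : Function.Antiperiodic (fun n : ℤ ↦ x ^ n) (N : ℤ) := by
  have hx₀ : x ≠ 0 := by
    rintro rfl
    simp [hN] at hx
  intro n
  simp only [zpow_add₀ hx₀, zpow_natCast, hx, mul_neg_one]

theorem LinSol.isLinSol {α : ℂ} {v : ℤ → ℤ → ℂ} (hv : LinSol α v) :
    IsLinSol (LinearMap.funLeft ℂ ℂ (· + 1)) (α ^ ·) v :=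
  fun n ↦ funext (hv n)

theorem lap2_eq_discreteLaplace (α : ℂ) (v : ℤ → ℤ → ℂ) (j : ℕ) :
    lap2 α v j = discreteLaplace (LinearMap.funLeft ℂ ℂ (· + 1)) (α ^ ·) v j := by
  induction j with
  | zero => rfl
  | succ j ih =>
    rw [lap2, ih]
    rfl

/-- `Ŵ₂(n,m) = (−1)^n·(v̌_{N−1}(n,m+1) + α^n·v̌_{N−1}(n,m))` is a first integral of `L_α`
in the `m`-direction when `α^N = −1`. -/
theorem explicit_first_integral_m_direction (N : ℕ) (hN : 1 ≤ N) (α : ℂ)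
    (hαN : α ^ N = -1) (v : ℤ → ℤ → ℂ) (hv : LinSol α v) :
    ∀ n m : ℤ,
      (-1 : ℂ) ^ (n + 1)
          * (lap2 α v (N - 1) (n + 1) (m + 1) + α ^ (n + 1) * lap2 α v (N - 1) (n + 1) m)
        = (-1 : ℂ) ^ n * (lap2 α v (N - 1) n (m + 1) + α ^ n * lap2 α v (N - 1) n m) := by
  intro n m
  have hα := antiperiodic_zpow_of_pow_eq_neg_one (Nat.one_le_iff_ne_zero.mp hN) hαN
  have h := congrFun (explicit_first_integral_m_direction_general hN hα hv.isLinSol n) m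
  simpa only [← lap2_eq_discreteLaplace, Pi.smul_apply, Pi.add_apply, LinearMap.funLeft_apply,
    Units.smul_def, zsmul_eq_mul, smul_eq_mul, Int.cast_negOnePow] using h
end

section
/- Let u be a solution of the discrete Burgers-type equation B_{−1} such that for all n,m ∈ ℤ: u(n,m) ≠ 0, u(n,m) ≠ 1, u(n,m) ≠ −1, and u(n+1,m)·u(n,m) ≠ 1. Then the function W₁(n,m) := (−1)^m · u(n,m)·(u(n+2,m)·u(n+1,m) − 1) / (u(n+1,m)·u(n,m) − 1) satisfies W₁(n,m+1) = W₁(n,m) for all n,m ∈ ℤ; that is, W₁ is a first integral of B_{−1} in the n-direction. -/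
/-- `u` is a solution of the discrete Burgers-type equation `B_{−1}`:
`(u(n+1,m+1)+1)(u(n,m)−1)u(n,m+1) = −(u(n,m+1)+1)(u(n+1,m)−1)u(n,m)`. -/
def BurSolNegOne (u : ℤ → ℤ → ℂ) : Prop :=
  ∀ n m : ℤ, (u (n + 1) (m + 1) + 1) * (u n m - 1) * u n (m + 1)
    = -((u n (m + 1) + 1) * (u (n + 1) m - 1) * u n m)

/-!
Put `P(n,m) = u(n+1,m)u(n,m) − 1` and `r(n,m) = (u(n,m+1)+1)/(u(n,m)−1)`. The equation says
`r(n+1,m)u(n,m+1) = −r(n,m)u(n,m)`, and it is equivalent to `P(n,m+1) = −r(n,m)P(n,m)`. So in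
`u(n,m)P(n+1,m)/P(n,m)` the step `m ↦ m + 1` multiplies the quotient of the `P`s by
`r(n+1,m)/r(n,m)` and `u` by `−r(n,m)/r(n+1,m)`. The net factor `−1` is absorbed by `(−1)^m`.
-/

/-- The equation `B_{−1}` for functions with values in an arbitrary commutative ring; over `ℂ` it
is `BurSolNegOne` by definition. -/
def IsBurgersSolution {R : Type*} [CommRing R] (u : ℤ → ℤ → R) : Prop :=
  ∀ n m : ℤ, (u (n + 1) (m + 1) + 1) * (u n m - 1) * u n (m + 1)
    = -((u n (m + 1) + 1) * (u (n + 1) m - 1) * u n m)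

theorem IsBurgersSolution.sub_one_mul_eq {R : Type*} [CommRing R] {u : ℤ → ℤ → R}
    (hu : IsBurgersSolution u) (n m : ℤ) :
    (u n m - 1) * (u (n + 1) (m + 1) * u n (m + 1) - 1)
      = -((u n (m + 1) + 1) * (u (n + 1) m * u n m - 1)) := by
  linear_combination hu n m

/-- The multiplier `(u(n,m+1)+1)/(u(n,m)−1)`, which governs how `u(n+1,m)u(n,m) − 1` changes when
`m` increases by one. It has the junk value `0` where `u(n,m) = 1`. -/
def burgersMultiplier {K : Type*} [Field K] (u : ℤ → ℤ → K) (n m : ℤ) : K :=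
  (u n (m + 1) + 1) / (u n m - 1)

section Multiplier

variable {K : Type*} [Field K] {u : ℤ → ℤ → K} {n m : ℤ}

theorem burgersMultiplier_ne_zero (h_one : u n m ≠ 1) (h_neg_one : u n (m + 1) ≠ -1) :
    burgersMultiplier u n m ≠ 0 :=
  div_ne_zero (mt eq_neg_of_add_eq_zero_left h_neg_one) (sub_ne_zero.mpr h_one)

namespace IsBurgersSolution

theorem ne_one (hu : IsBurgersSolution u) (h_neg_one : u n (m + 1) ≠ -1)
    (h_mul : u (n + 1) m * u n m ≠ 1) : u n m ≠ 1 := by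
  intro h_one
  have h_zero : (u n (m + 1) + 1) * (u (n + 1) m * u n m - 1) = 0 := by
    simpa [h_one] using hu.sub_one_mul_eq n m
  exact mul_ne_zero (mt eq_neg_of_add_eq_zero_left h_neg_one) (sub_ne_zero.mpr h_mul) h_zero

theorem mul_sub_one_add_one (hu : IsBurgersSolution u) (h_one : u n m ≠ 1) :
    u (n + 1) (m + 1) * u n (m + 1) - 1
      = -burgersMultiplier u n m * (u (n + 1) m * u n m - 1) := by
  have h_sub : u n m - 1 ≠ 0 := sub_ne_zero.mpr h_one
  rw [burgersMultiplier]
  field_simp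
  linear_combination hu.sub_one_mul_eq n m

theorem burgersMultiplier_add_one_mul (hu : IsBurgersSolution u) (h_one : u n m ≠ 1)
    (h_one' : u (n + 1) m ≠ 1) :
    burgersMultiplier u (n + 1) m * u n (m + 1) = -(burgersMultiplier u n m * u n m) := by
  have h_sub : u n m - 1 ≠ 0 := sub_ne_zero.mpr h_one
  have h_sub' : u (n + 1) m - 1 ≠ 0 := sub_ne_zero.mpr h_one'
  rw [burgersMultiplier, burgersMultiplier]
  field_simp
  linear_combination hu n m

end IsBurgersSolution

end Multiplier

theorem explicit_burgers_first_integral_n_general {K : Type*} [Field K] (u : ℤ → ℤ → K)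
    (hu : IsBurgersSolution u) (h_neg_one : ∀ n m : ℤ, u n m ≠ -1)
    (h_mul : ∀ n m : ℤ, u (n + 1) m * u n m ≠ 1) :
    ∀ n m : ℤ,
      (-1 : K) ^ (m + 1) * u n (m + 1) * (u (n + 2) (m + 1) * u (n + 1) (m + 1) - 1)
          / (u (n + 1) (m + 1) * u n (m + 1) - 1)
        = (-1 : K) ^ m * u n m * (u (n + 2) m * u (n + 1) m - 1)
          / (u (n + 1) m * u n m - 1) := by
  intro n m
  have h_one (k : ℤ) : u k m ≠ 1 := hu.ne_one (h_neg_one k _) (h_mul k m)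
  have hr : burgersMultiplier u n m ≠ 0 := burgersMultiplier_ne_zero (h_one n) (h_neg_one n _)
  have hP := hu.mul_sub_one_add_one (h_one n)
  have hP' := hu.mul_sub_one_add_one (h_one (n + 1))
  rw [show n + 1 + 1 = n + 2 by ring] at hP'
  have hru := hu.burgersMultiplier_add_one_mul (h_one n) (h_one (n + 1))
  set r := burgersMultiplier u n m
  set r' := burgersMultiplier u (n + 1) m
  set P := u (n + 1) m * u n m - 1
  set P' := u (n + 2) m * u (n + 1) m - 1
  rw [hP, hP', zpow_add_one₀ (neg_ne_zero.mpr one_ne_zero)]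
  calc (-1) ^ m * -1 * u n (m + 1) * (-r' * P') / (-r * P)
      = (-1) ^ m * (r' * u n (m + 1)) * P' / (-r * P) := by ring
    _ = -r * ((-1) ^ m * u n m * P') / (-r * P) := by rw [hru]; ring
    _ = (-1) ^ m * u n m * P' / P := mul_div_mul_left _ _ (neg_ne_zero.mpr hr)

/-- `W₁(n,m) = (−1)^m·u(n,m)(u(n+2,m)u(n+1,m) − 1)/(u(n+1,m)u(n,m) − 1)` is a first
integral of `B_{−1}` in the `n`-direction. -/
theorem explicit_burgers_first_integral_n (u : ℤ → ℤ → ℂ) (hu : BurSolNegOne u)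
    (h0 : ∀ n m : ℤ, u n m ≠ 0) (h1 : ∀ n m : ℤ, u n m ≠ 1)
    (h2 : ∀ n m : ℤ, u n m ≠ -1) (h3 : ∀ n m : ℤ, u (n + 1) m * u n m ≠ 1) :
    ∀ n m : ℤ,
      (-1 : ℂ) ^ (m + 1) * u n (m + 1) * (u (n + 2) (m + 1) * u (n + 1) (m + 1) - 1)
          / (u (n + 1) (m + 1) * u n (m + 1) - 1)
        = (-1 : ℂ) ^ m * u n m * (u (n + 2) m * u (n + 1) m - 1)
          / (u (n + 1) m * u n m - 1) :=
  explicit_burgers_first_integral_n_general u hu h2 h3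
end

section
/- Let u be a solution of the discrete Burgers-type equation B_{−1} such that for all n,m ∈ ℤ: u(n,m) ≠ 0, u(n,m) ≠ 1, u(n,m) ≠ −1, and u(n,m) + u(n,m+1) ≠ 0. Then the function W₂(n,m) := (−1)^n · (u(n,m+1) + u(n,m+2))·(u(n,m) − 1) / ((u(n,m) + u(n,m+1))·(u(n,m+2) + 1)) satisfies W₂(n+1,m) = W₂(n,m) for all n,m ∈ ℤ; that is, W₂ is a first integral of B_{−1} in the m-direction. -/
/-!
`W₂(n,m)` is `(−1)^n` times the product of `(u(n,m+1) + u(n,m+2)) / (u(n,m+2) + 1)` and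
`(u(n,m) − 1) / (u(n,m) + u(n,m+1))`. On a single square of the lattice the equation says that a
step in `n` divides the first factor by `u(n,m+1)` and multiplies the second one by `−u(n,m+1)`,
so that `W₂` is preserved.
-/

/-- The equation `B_{−1}` on one square of the lattice, where `a = u(n,m)`, `b = u(n,m+1)`,
`A = u(n+1,m)` and `B = u(n+1,m+1)`. -/
def BurgersSquare {R : Type*} [CommRing R] (a b A B : R) : Prop :=
  (B + 1) * (a - 1) * b = -((b + 1) * (A - 1) * a)

namespace BurgersSquare

section CommRing

variable {R : Type*} [CommRing R] {a b A B : R}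

lemma add_one_mul_mul_add (h : BurgersSquare a b A B) :
    (b + 1) * a * (A + B) = (B + 1) * (a + b) := by
  unfold BurgersSquare at h
  linear_combination h

lemma sub_one_mul_mul_add (h : BurgersSquare a b A B) :
    (a - 1) * b * (A + B) = -((A - 1) * (a + b)) := by
  unfold BurgersSquare at h
  linear_combination h

end CommRing

section Field

variable {K : Type*} [Field K] {a b A B : K}

lemma ne_zero (h : BurgersSquare a b A B) (hB : B + 1 ≠ 0) (hab : a + b ≠ 0) : a ≠ 0 := by
  rintro rfl
  exact mul_ne_zero hB hab (by simpa using h.add_one_mul_mul_add.symm)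

lemma add_div_add_one (h : BurgersSquare a b A B) (ha : a ≠ 0) (hb : b + 1 ≠ 0)
    (hB : B + 1 ≠ 0) : (A + B) / (B + 1) = (a + b) / (b + 1) / a := by
  rw [div_div, div_eq_div_iff hB (mul_ne_zero hb ha)]
  linear_combination h.add_one_mul_mul_add

lemma sub_one_div_add (h : BurgersSquare a b A B) (hab : a + b ≠ 0) (hAB : A + B ≠ 0) :
    (A - 1) / (A + B) = -b * ((a - 1) / (a + b)) := by
  rw [← mul_div_assoc, div_eq_div_iff hAB hab]
  linear_combination h.sub_one_mul_mul_add

end Field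

end BurgersSquare

section FirstIntegral

variable {K : Type*} [Field K]

/-- The first integral `W₂` of `B_{−1}` in the `m`-direction, for functions with values in an
arbitrary field. -/
def burgersW₂ (u : ℤ → ℤ → K) (n m : ℤ) : K :=
  (-1) ^ n * ((u n (m + 1) + u n (m + 2)) * (u n m - 1))
    / ((u n m + u n (m + 1)) * (u n (m + 2) + 1))

lemma burgersW₂_eq_mul (u : ℤ → ℤ → K) (n m : ℤ) :
    burgersW₂ u n m = (-1) ^ n * ((u n (m + 1) + u n (m + 2)) / (u n (m + 2) + 1)
      * ((u n m - 1) / (u n m + u n (m + 1)))) := by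
  rw [burgersW₂, mul_div_assoc, div_mul_div_comm, mul_comm (u n m + u n (m + 1))]

theorem explicit_burgers_first_integral_m_general (u : ℤ → ℤ → K)
    (hu : ∀ n m : ℤ, BurgersSquare (u n m) (u n (m + 1)) (u (n + 1) m) (u (n + 1) (m + 1)))
    (hneg : ∀ n m : ℤ, u n m ≠ -1) (hadd : ∀ n m : ℤ, u n m + u n (m + 1) ≠ 0) (n m : ℤ) :
    burgersW₂ u (n + 1) m = burgersW₂ u n m := by
  have add_one_ne (k l : ℤ) : u k l + 1 ≠ 0 := mt eq_neg_of_add_eq_zero_left (hneg k l)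
  have u_ne_zero : u n (m + 1) ≠ 0 := (hu n (m + 1)).ne_zero (add_one_ne _ _) (hadd _ _)
  have next_square : BurgersSquare (u n (m + 1)) (u n (m + 2)) (u (n + 1) (m + 1))
      (u (n + 1) (m + 2)) := by
    simpa only [add_assoc, one_add_one_eq_two] using hu n (m + 1)
  rw [burgersW₂_eq_mul, burgersW₂_eq_mul,
    next_square.add_div_add_one u_ne_zero (add_one_ne _ _) (add_one_ne _ _),
    (hu n m).sub_one_div_add (hadd _ _) (hadd _ _), zpow_add_one₀ (neg_ne_zero.2 one_ne_zero)]
  field_simp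

end FirstIntegral

/-- `W₂(n,m) = (−1)^n·(u(n,m+1)+u(n,m+2))(u(n,m)−1)/((u(n,m)+u(n,m+1))(u(n,m+2)+1))`
is a first integral of `B_{−1}` in the `m`-direction. -/
theorem explicit_burgers_first_integral_m (u : ℤ → ℤ → ℂ) (hu : BurSolNegOne u)
    (h0 : ∀ n m : ℤ, u n m ≠ 0) (h1 : ∀ n m : ℤ, u n m ≠ 1)
    (h2 : ∀ n m : ℤ, u n m ≠ -1) (h3 : ∀ n m : ℤ, u n m + u n (m + 1) ≠ 0) :
    ∀ n m : ℤ,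
      (-1 : ℂ) ^ (n + 1) * ((u (n + 1) (m + 1) + u (n + 1) (m + 2)) * (u (n + 1) m - 1))
          / ((u (n + 1) m + u (n + 1) (m + 1)) * (u (n + 1) (m + 2) + 1))
        = (-1 : ℂ) ^ n * ((u n (m + 1) + u n (m + 2)) * (u n m - 1))
          / ((u n m + u n (m + 1)) * (u n (m + 2) + 1)) :=
  explicit_burgers_first_integral_m_general u hu h2 h3
end

section
/- Let v be a solution of the linear equation L_{−1}, i.e. v(n+1,m+1) + v(n,m+1) = (−1)^n·(v(n+1,m) − v(n,m)) for all n,m ∈ ℤ. Then for all n,m ∈ ℤ: (a) the function Ŵ₁(n,m) := (−1)^{(1−n)·m}·(v(n+2,m) − v(n,m)) satisfies Ŵ₁(n,m+1) = Ŵ₁(n,m), and (b) the function Ŵ₂(n,m) := (−1)^n·v(n,m+1) + v(n,m) satisfies Ŵ₂(n+1,m) = Ŵ₂(n,m); that is, Ŵ₁ and Ŵ₂ are first integrals of L_{−1} of orders 2 and 1 in the n- and m-directions respectively. -/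
/-- `v` is a solution of the linear equation `L_{−1}`:
`v(n+1,m+1) + v(n,m+1) = (−1)^n·(v(n+1,m) − v(n,m))` for all integers `n, m`. -/
def LinSolNegOne (v : ℤ → ℤ → ℂ) : Prop :=
  ∀ n m : ℤ, v (n + 1) (m + 1) + v n (m + 1) = (-1 : ℂ) ^ n * (v (n + 1) m - v n m)

/-- The equation `L_{−1}` for functions with values in an abelian group, on which the sign `(−1)^n`
acts as the unit `n.negOnePow` of `ℤ`. -/
def IsLNegOneSolution {A : Type*} [AddCommGroup A] (v : ℤ → ℤ → A) : Prop :=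
  ∀ n m : ℤ, v (n + 1) (m + 1) + v n (m + 1) = n.negOnePow • (v (n + 1) m - v n m)

theorem negOnePow_smul_eq_zpow_mul {K : Type*} [DivisionRing K] (n : ℤ) (x : K) :
    n.negOnePow • x = (-1 : K) ^ n * x := by
  rw [Units.smul_def, zsmul_eq_mul, Int.cast_negOnePow]

theorem linSolNegOne_iff_isLNegOneSolution {v : ℤ → ℤ → ℂ} :
    LinSolNegOne v ↔ IsLNegOneSolution v := by
  simp only [LinSolNegOne, IsLNegOneSolution, negOnePow_smul_eq_zpow_mul]

namespace IsLNegOneSolution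

variable {A : Type*} [AddCommGroup A] {v : ℤ → ℤ → A}

theorem sub_succ_eq_negOnePow_smul (hv : IsLNegOneSolution v) (n m : ℤ) :
    v (n + 2) (m + 1) - v n (m + 1) = (1 - n).negOnePow • (v (n + 2) m - v n m) := by
  have shifted : v (n + 2) (m + 1) + v (n + 1) (m + 1) =
      -(n.negOnePow • (v (n + 2) m - v (n + 1) m)) := by
    simpa only [add_assoc, one_add_one_eq_two, Int.negOnePow_succ, Units.neg_smul] using
      hv (n + 1) m
  have sign : (1 - n).negOnePow = -n.negOnePow := by
    rw [Int.negOnePow_sub, Int.negOnePow_one, neg_one_mul]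
  -- On subtracting the equation at `n` from the one at `n + 1`, whose sign is opposite, the values
  -- at `n + 1` cancel on both sides.
  calc v (n + 2) (m + 1) - v n (m + 1)
      = (v (n + 2) (m + 1) + v (n + 1) (m + 1)) - (v (n + 1) (m + 1) + v n (m + 1)) := by abel
    _ = -(n.negOnePow • ((v (n + 2) m - v (n + 1) m) + (v (n + 1) m - v n m))) := by
      rw [shifted, hv n m, smul_add]; abel
    _ = (1 - n).negOnePow • (v (n + 2) m - v n m) := by
      rw [sub_add_sub_cancel, sign, Units.neg_smul]

theorem negOnePow_smul_add_succ (hv : IsLNegOneSolution v) (n m : ℤ) :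
    n.negOnePow • (v (n + 1) (m + 1) + v n (m + 1)) = v (n + 1) m - v n m := by
  rw [hv n m, smul_smul, Int.units_mul_self, one_smul]

theorem first_integral_of_order_two (hv : IsLNegOneSolution v) (n m : ℤ) :
    ((1 - n) * (m + 1)).negOnePow • (v (n + 2) (m + 1) - v n (m + 1)) =
      ((1 - n) * m).negOnePow • (v (n + 2) m - v n m) := by
  rw [hv.sub_succ_eq_negOnePow_smul, smul_smul, mul_add_one, Int.negOnePow_add, mul_assoc,
    Int.units_mul_self, mul_one]

theorem first_integral_of_order_one (hv : IsLNegOneSolution v) (n m : ℤ) :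
    (n + 1).negOnePow • v (n + 1) (m + 1) + v (n + 1) m = n.negOnePow • v n (m + 1) + v n m := by
  have h := hv.negOnePow_smul_add_succ n m
  rw [smul_add, eq_sub_iff_add_eq] at h
  rw [Int.negOnePow_succ, Units.neg_smul, ← h]
  abel

end IsLNegOneSolution

theorem explicit_first_integrals_alpha_neg_one_general {A : Type*} [AddCommGroup A]
    (v : ℤ → ℤ → A) (hv : IsLNegOneSolution v) :
    ∀ n m : ℤ,
      (((1 - n) * (m + 1)).negOnePow • (v (n + 2) (m + 1) - v n (m + 1))
          = ((1 - n) * m).negOnePow • (v (n + 2) m - v n m))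
      ∧ ((n + 1).negOnePow • v (n + 1) (m + 1) + v (n + 1) m
          = n.negOnePow • v n (m + 1) + v n m) :=
  fun n m => ⟨hv.first_integral_of_order_two n m, hv.first_integral_of_order_one n m⟩

/-- For `L_{−1}`, the functions `Ŵ₁(n,m) = (−1)^{(1−n)m}·(v(n+2,m) − v(n,m))` and
`Ŵ₂(n,m) = (−1)^n·v(n,m+1) + v(n,m)` are first integrals in the `n`- and
`m`-directions respectively, of orders `2` and `1`. -/
theorem explicit_first_integrals_alpha_neg_one (v : ℤ → ℤ → ℂ) (hv : LinSolNegOne v) :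
    ∀ n m : ℤ,
      ((-1 : ℂ) ^ ((1 - n) * (m + 1)) * (v (n + 2) (m + 1) - v n (m + 1))
          = (-1 : ℂ) ^ ((1 - n) * m) * (v (n + 2) m - v n m))
      ∧ ((-1 : ℂ) ^ (n + 1) * v (n + 1) (m + 1) + v (n + 1) m
          = (-1 : ℂ) ^ n * v n (m + 1) + v n m) := by
  simpa only [negOnePow_smul_eq_zpow_mul] using
    explicit_first_integrals_alpha_neg_one_general v (linSolNegOne_iff_isLNegOneSolution.mp hv)
end
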